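/- Let p_1 < p_2 < ... denote the sequence of all primes, let k ≥ 0 be an integer, and for n ≥ 1 set 𝒮(n) = ∑_{d | n} d·φ(d). Then the limit as N → ∞ of (∑_{i=1}^N p_i^k · 𝒮(p_i − 1)) / (∑_{i=1}^N p_i^k · (p_i − 1)²) exists and equals Stephens' constant S = ∏_p (1 − p/(p³ − 1)), the infinite product over all primes p. -/

import Mathlib

open Filter

/-- `𝒮(n) = ∑_{d | n} d·φ(d)`. -/
def stephensSum (n : ℕ) : ℕ := ∑ d ∈ n.divisors, d * d.totient

/-- Stephens' constant `S = ∏_p (1 - p/(p³ - 1))`, product over all primes. -/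
noncomputable def stephensConstant : ℝ :=
  ∏' p : Nat.Primes, (1 - ((p : ℕ) : ℝ) / (((p : ℕ) : ℝ) ^ 3 - 1))

/-!
Write `𝒮(n) / n² = ∑_{d ∣ n} h d` with `h` multiplicative. Exchanging sums, the mean of
`log p · 𝒮(p - 1) / (p - 1)²` over the primes `p ≤ N` is `∑ₘ h m · θ(N; m, 1) / N`, where
`θ(N; m, 1)` is Chebyshev's function of the progression `1 mod m`. For each fixed `m`, the prime
number theorem in arithmetic progressions gives `θ(N; m, 1) / N → 1 / φ(m)`, and a
Brun–Titchmarsh-type bound `θ(N; m, 1) / N ≪ log m / m`, uniform in `m` and `N`, dominates the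
series. The mean therefore tends to `∑ₘ h m / φ(m)`, whose Euler product is Stephens' constant.
Summation by parts replaces the weights `log p` by `p ^ k (p - 1)²`.

The prime number theorem in arithmetic progressions comes from the Wiener–Ikehara theorem, where
Lévy's continuity theorem takes the place of the approximation of an indicator function by
band-limited ones: the translates of the underlying measure, weighted by a positive integrable
kernel with compactly supported Fourier transform, have convergent characteristic functions, hence
converge weakly.
-/

section

open MeasureTheory Real Set Topology FourierTransform
open scoped BoundedContinuousFunction Convolution ENNReal

/-- The positive measure `ν` on `[0, ∞)` has a Laplace transform converging on `re s > 0` and equal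
there to `A / s + G s`, where `G` is continuous up to the line `re s = 0`. This is the hypothesis of
the Wiener–Ikehara theorem, with the pole moved to `0`. -/
structure LaplaceContinuation (ν : Measure ℝ) (A : ℝ) (G : ℂ → ℂ) : Prop where
  ae_nonneg : ∀ᵐ x ∂ν, 0 ≤ x
  residue_pos : 0 < A
  integrable_exp : ∀ σ > 0, Integrable (fun x => rexp (-(σ * x))) ν
  continuousOn : ContinuousOn G {s | 0 ≤ s.re}
  laplace_eq : ∀ s : ℂ, 0 < s.re → ∫ x : ℝ, Complex.exp (-(s * x)) ∂ν = A / s + G s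

section LaplaceFourier

variable {ν : Measure ℝ} {A σ : ℝ} {G : ℂ → ℂ}

lemma integral_exp_mul_fourier [SigmaFinite ν] {g : ℝ → ℂ} (hg : Integrable g)
    (hν : Integrable (fun x => rexp (-(σ * x))) ν) (y : ℝ) :
    ∫ x, (rexp (-(σ * x)) : ℂ) * 𝓕 g (x - y) ∂ν =
      ∫ t, 𝐞 (t * y) • (g t * ∫ x : ℝ, Complex.exp (-((σ + 2 * π * t * Complex.I) * x)) ∂ν) := by
  have hmod : Integrable (fun t => 𝐞 (t * y) • g t) := by
    simpa [mul_comm y] using (Real.fourierIntegral_convergent_iff (f := g) (-y)).2 hg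
  have hcexp : Integrable (fun x => (rexp (-(σ * x)) : ℂ)) ν := hν.ofReal
  have key := VectorFourier.integral_fourierIntegral_smul_eq_flip (e := 𝐞) (μ := volume) (ν := ν)
    (L := LinearMap.mul ℝ ℝ) Real.continuous_fourierChar (by simpa using continuous_mul)
    hmod hcexp
  calc ∫ x, (rexp (-(σ * x)) : ℂ) * 𝓕 g (x - y) ∂ν
      = ∫ x, VectorFourier.fourierIntegral 𝐞 volume (LinearMap.mul ℝ ℝ)
          (fun t => 𝐞 (t * y) • g t) x • (rexp (-(σ * x)) : ℂ) ∂ν := by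
        congr with x
        rw [smul_eq_mul, mul_comm, Real.fourier_real_eq]
        congr 2 with t
        rw [smul_smul, ← AddChar.map_add_eq_mul]
        congr 2
        simp only [LinearMap.mul_apply']
        ring
    _ = _ := by
        rw [key]
        congr with t
        rw [smul_eq_mul, smul_mul_assoc]
        congr 2
        simp only [VectorFourier.fourierIntegral, LinearMap.flip_apply, LinearMap.mul_apply',
          Circle.smul_def, Real.fourierChar_apply, smul_eq_mul, Complex.ofReal_exp,
          ← Complex.exp_add]
        congr with x
        congr 1
        push_cast
        ring

lemma isLocallyFiniteMeasure_of_integrable_exp_neg (hν : Integrable (fun x => rexp (-x)) ν) :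
    IsLocallyFiniteMeasure ν where
  finiteAtNhds x := by
    refine ⟨Iio (x + 1), Iio_mem_nhds (lt_add_one x), ?_⟩
    refine (measure_mono fun z hz => ?_).trans_lt
      (hν.measure_norm_ge_lt_top (Real.exp_pos (-(x + 1))))
    simpa using (mem_Iio.1 hz).le

lemma integral_Ioi_cexp_neg_mul {s : ℂ} (hs : 0 < s.re) :
    ∫ x : ℝ in Ioi 0, Complex.exp (-(s * x)) = 1 / s := by
  have := integral_exp_mul_complex_Ioi (a := -s) (by simpa using hs) 0
  simpa using this

lemma integrable_circle_smul_mul_of_hasCompactSupport {g F : ℝ → ℂ} (hg : Integrable g)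
    (hgs : HasCompactSupport g) (hF : Continuous F) (y : ℝ) :
    Integrable fun t => 𝐞 (t * y) • (g t * F t) := by
  have hmul : Integrable fun t => g t * F t := by
    rw [← integrableOn_iff_integrable_of_support_subset
      ((Function.support_mul_subset_left g F).trans (subset_tsupport g))]
    exact hg.integrableOn.mul_continuousOn hF.continuousOn hgs
  simpa [mul_comm y] using
    (Real.fourierIntegral_convergent_iff (f := fun t => g t * F t) (-y)).2 hmul

namespace LaplaceContinuation

lemma integrable_exp_neg (h : LaplaceContinuation ν A G) : Integrable (fun x => rexp (-x)) ν := by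
  simpa using h.integrable_exp 1 one_pos

lemma sigmaFinite (h : LaplaceContinuation ν A G) : SigmaFinite ν :=
  have := isLocallyFiniteMeasure_of_integrable_exp_neg h.integrable_exp_neg
  inferInstance

lemma continuous_comp_line (h : LaplaceContinuation ν A G) (hσ : 0 ≤ σ) :
    Continuous fun t : ℝ => G (σ + 2 * π * t * Complex.I) :=
  h.continuousOn.comp_continuous (by fun_prop) fun t => by simpa using hσ

lemma integral_fourier_sub_pole (h : LaplaceContinuation ν A G) {g : ℝ → ℂ}
    (hg : Integrable g) (hgs : HasCompactSupport g) (hσ : 0 < σ) (y : ℝ) :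
    ∫ x, (rexp (-(σ * x)) : ℂ) * 𝓕 g (x - y) ∂ν
        - A * ∫ x in Ioi 0, (rexp (-(σ * x)) : ℂ) * 𝓕 g (x - y) =
      ∫ t, 𝐞 (t * y) • (g t * G (σ + 2 * π * t * Complex.I)) := by
  have := h.sigmaFinite
  have hre (t : ℝ) : 0 < (σ + 2 * π * t * Complex.I : ℂ).re := by simpa using hσ
  have hne (t : ℝ) : (σ + 2 * π * t * Complex.I : ℂ) ≠ 0 := fun h0 => by simpa [h0] using hre t
  have hpole : Integrable fun t : ℝ =>
      𝐞 (t * y) • (g t * (A * (1 / (σ + 2 * π * t * Complex.I : ℂ)))) :=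
    integrable_circle_smul_mul_of_hasCompactSupport hg hgs
      (continuous_const.mul (continuous_const.div (by fun_prop) hne)) y
  have hIoi : Integrable (fun x => rexp (-(σ * x))) (volume.restrict (Ioi 0)) := by
    simpa [IntegrableOn] using exp_neg_integrableOn_Ioi 0 hσ
  rw [integral_exp_mul_fourier hg (h.integrable_exp σ hσ), integral_exp_mul_fourier hg hIoi]
  simp_rw [integral_Ioi_cexp_neg_mul (hre _), h.laplace_eq _ (hre _)]
  rw [sub_eq_iff_eq_add, ← integral_const_mul, ← integral_add
    (integrable_circle_smul_mul_of_hasCompactSupport hg hgs (h.continuous_comp_line hσ.le) y)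
    (by simpa only [mul_left_comm, Circle.smul_def, smul_eq_mul] using hpole)]
  congr with t
  simp only [Circle.smul_def, smul_eq_mul]
  ring

lemma tendsto_integral_circle_smul_mul (h : LaplaceContinuation ν A G) {g : ℝ → ℂ}
    (hg : Integrable g) (hgs : HasCompactSupport g) (y : ℝ) :
    Tendsto (fun σ : ℝ => ∫ t, 𝐞 (t * y) • (g t * G (σ + 2 * π * t * Complex.I))) (𝓝[>] 0)
      (𝓝 (∫ t, 𝐞 (t * y) • (g t * G (2 * π * t * Complex.I)))) := by
  have hcont : ContinuousOn (fun p : ℝ × ℝ => G (p.1 + 2 * π * p.2 * Complex.I))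
      (Icc 0 1 ×ˢ tsupport g) :=
    h.continuousOn.comp (by fun_prop) fun p hp => by simpa using hp.1.1
  obtain ⟨C, hC⟩ := (isCompact_Icc.prod hgs).exists_bound_of_continuousOn hcont
  have hnear : ∀ᶠ σ : ℝ in 𝓝[>] 0, σ ∈ Ioc (0 : ℝ) 1 := Ioc_mem_nhdsGT one_pos
  refine tendsto_integral_filter_of_dominated_convergence (fun t => ‖g t‖ * C) ?_ ?_
    (hg.norm.mul_const C) (ae_of_all _ fun t => ?_)
  · filter_upwards [hnear] with σ hσ
    exact (integrable_circle_smul_mul_of_hasCompactSupport hg hgs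
      (h.continuous_comp_line hσ.1.le) y).aestronglyMeasurable
  · filter_upwards [hnear] with σ hσ
    refine ae_of_all _ fun t => ?_
    rw [Circle.norm_smul, norm_mul]
    by_cases ht : t ∈ tsupport g
    · gcongr
      exact hC (σ, t) ⟨Ioc_subset_Icc_self hσ, ht⟩
    · simp [image_eq_zero_of_notMem_tsupport ht]
  · refine Tendsto.const_smul (Tendsto.const_mul _ ?_) _
    have hG := h.continuousOn (2 * π * t * Complex.I) (by simp)
    refine hG.tendsto.comp (tendsto_nhdsWithin_iff.2 ⟨?_, ?_⟩)
    · have : Continuous fun σ : ℝ => (σ + 2 * π * t * Complex.I : ℂ) := by fun_prop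
      simpa using (this.tendsto 0).mono_left nhdsWithin_le_nhds
    · filter_upwards [hnear] with σ hσ
      simpa using hσ.1.le

end LaplaceContinuation

lemma tendsto_integral_exp_mul_of_integrable {f : ℝ → ℂ} (hν : ∀ᵐ x ∂ν, 0 ≤ x)
    (hf : Integrable f ν) :
    Tendsto (fun σ : ℝ => ∫ x, (rexp (-(σ * x)) : ℂ) * f x ∂ν) (𝓝[>] 0) (𝓝 (∫ x, f x ∂ν)) := by
  refine tendsto_integral_filter_of_dominated_convergence (fun x => ‖f x‖)
    (Eventually.of_forall fun σ => ?_) ?_ hf.norm (ae_of_all _ fun x => ?_)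
  · exact (Continuous.aestronglyMeasurable (by fun_prop)).mul hf.aestronglyMeasurable
  · filter_upwards [self_mem_nhdsWithin] with σ hσ
    filter_upwards [hν] with x hx
    rw [norm_mul, Complex.norm_real, Real.norm_eq_abs, abs_of_pos (Real.exp_pos _)]
    exact mul_le_of_le_one_left (norm_nonneg _)
      (Real.exp_le_one_iff.2 (neg_nonpos.2 (mul_nonneg (mem_Ioi.1 hσ).le hx)))
  · have : Continuous fun σ : ℝ => (rexp (-(σ * x)) : ℂ) * f x := by fun_prop
    simpa using (this.tendsto 0).mono_left nhdsWithin_le_nhds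

lemma integrable_of_tendsto_integral_exp_mul {f : ℝ → ℝ} {L : ℝ} (hf : 0 ≤ f)
    (hint : ∀ σ > 0, Integrable (fun x => rexp (-(σ * x)) * f x) ν)
    (hL : Tendsto (fun σ : ℝ => ∫ x, rexp (-(σ * x)) * f x ∂ν) (𝓝[>] 0) (𝓝 L)) :
    Integrable f ν := by
  set σ : ℕ → ℝ := fun n => 1 / ((n : ℝ) + 1)
  have hσ (n : ℕ) : 0 < σ n := Nat.one_div_pos_of_nat
  have hσ_lim : Tendsto σ atTop (𝓝 0) := tendsto_one_div_add_atTop_nhds_zero_nat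
  have hlint (n : ℕ) : ∫⁻ x, ‖rexp (-(σ n * x)) * f x‖ₑ ∂ν =
      ENNReal.ofReal (∫ x, rexp (-(σ n * x)) * f x ∂ν) := by
    rw [← ofReal_integral_norm_eq_lintegral_enorm (hint _ (hσ n))]
    congr with x
    exact Real.norm_of_nonneg (mul_nonneg (Real.exp_pos _).le (hf x))
  refine integrable_of_tendsto (G := fun n x => rexp (-(σ n * x)) * f x) (ae_of_all _ fun x => ?_)
    (fun n => (hint _ (hσ n)).aestronglyMeasurable) ?_
  · have : Continuous fun r : ℝ => rexp (-(r * x)) * f x := by fun_prop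
    simpa [Function.comp_def] using (this.tendsto 0).comp hσ_lim
  · have hlim := (ENNReal.tendsto_ofReal hL).comp
      (tendsto_nhdsWithin_iff.2 ⟨hσ_lim, Eventually.of_forall hσ⟩)
    simp_rw [hlint]
    exact hlim.liminf_eq ▸ ENNReal.ofReal_ne_top

namespace LaplaceContinuation

variable {k : ℝ → ℝ} {g : ℝ → ℂ}

lemma integrable_kernel_comp_sub (h : LaplaceContinuation ν A G)
    (hg : Integrable g) (hgs : HasCompactSupport g) (hk : Integrable k) (hk_nonneg : 0 ≤ k)
    (hk_eq : ∀ u, 𝓕 g u = k u) (y : ℝ) : Integrable (fun x => k (x - y)) ν := by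
  have hk_cont : Continuous k := by
    have : Continuous fun u => (𝓕 g u).re := by
      exact Complex.continuous_re.comp (VectorFourier.fourierIntegral_continuous
        Real.continuous_fourierChar (by exact continuous_inner) hg)
    simpa [hk_eq] using this
  have hk_bdd (u : ℝ) : ‖k u‖ ≤ ∫ t, ‖g t‖ := by
    rw [← Complex.norm_real, ← hk_eq]
    exact VectorFourier.norm_fourierIntegral_le_integral_norm _ _ _ _ _
  have hpole : Tendsto (fun σ : ℝ => ∫ x in Ioi 0, (rexp (-(σ * x)) : ℂ) * 𝓕 g (x - y)) (𝓝[>] 0)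
      (𝓝 (∫ x in Ioi 0, 𝓕 g (x - y))) := by
    refine tendsto_integral_exp_mul_of_integrable
      ((ae_restrict_mem measurableSet_Ioi).mono fun x hx => (mem_Ioi.1 hx).le) ?_
    simp_rw [hk_eq]
    exact (hk.comp_sub_right y).ofReal.restrict
  have hlim := (h.tendsto_integral_circle_smul_mul hg hgs y).add (hpole.const_mul (A : ℂ))
  refine integrable_of_tendsto_integral_exp_mul (fun x => hk_nonneg (x - y)) (fun σ hσ => ?_)
    (((Complex.continuous_re.tendsto _).comp hlim).congr' ?_)
  · exact (h.integrable_exp σ hσ).mul_bdd (by fun_prop) (ae_of_all _ fun x => hk_bdd (x - y))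
  · filter_upwards [self_mem_nhdsWithin] with σ hσ
    have hid := h.integral_fourier_sub_pole hg hgs (mem_Ioi.1 hσ) y
    rw [Function.comp_apply, ← hid, sub_add_cancel]
    simp_rw [hk_eq, ← Complex.ofReal_mul]
    rw [integral_complex_ofReal, Complex.ofReal_re]

lemma integral_fourier_comp_sub (h : LaplaceContinuation ν A G)
    (hg : Integrable g) (hgs : HasCompactSupport g) (hFg : Integrable (𝓕 g)) {y : ℝ}
    (hFgν : Integrable (fun x => 𝓕 g (x - y)) ν) :
    ∫ x, 𝓕 g (x - y) ∂ν = (A * ∫ x in Ioi 0, 𝓕 g (x - y)) +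
      ∫ t, 𝐞 (t * y) • (g t * G (2 * π * t * Complex.I)) := by
  rw [← sub_eq_iff_eq_add']
  refine tendsto_nhds_unique (Tendsto.sub (tendsto_integral_exp_mul_of_integrable h.ae_nonneg hFgν)
    ((tendsto_integral_exp_mul_of_integrable
      ((ae_restrict_mem measurableSet_Ioi).mono fun x hx => (mem_Ioi.1 hx).le)
      (hFg.comp_sub_right y).restrict).const_mul (A : ℂ)))
    ((h.tendsto_integral_circle_smul_mul hg hgs y).congr' ?_)
  filter_upwards [self_mem_nhdsWithin] with σ hσ
  exact (h.integral_fourier_sub_pole hg hgs (mem_Ioi.1 hσ) y).symm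

lemma tendsto_integral_fourier_comp_sub (h : LaplaceContinuation ν A G)
    (hg : Integrable g) (hgs : HasCompactSupport g) (hFg : Integrable (𝓕 g))
    (hFgν : ∀ y, Integrable (fun x => 𝓕 g (x - y)) ν) :
    Tendsto (fun y => ∫ x, 𝓕 g (x - y) ∂ν) atTop (𝓝 (A * ∫ u, 𝓕 g u)) := by
  have hosc : Tendsto (fun y => ∫ t, 𝐞 (t * y) • (g t * G (2 * π * t * Complex.I))) atTop (𝓝 0) :=
    ((Real.tendsto_integral_exp_smul_cocompact fun t => g t * G (2 * π * t * Complex.I)).comp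
      (tendsto_neg_atTop_atBot.mono_right atBot_le_cocompact)).congr fun y => by simp
  have hpole : Tendsto (fun y => ∫ x in Ioi 0, 𝓕 g (x - y)) atTop (𝓝 (∫ u, 𝓕 g u)) := by
    refine ((aecover_Ioi tendsto_neg_atTop_atBot).integral_tendsto_of_countably_generated
      hFg).congr fun y => ?_
    have htrans := (measurePreserving_sub_right volume y).setIntegral_preimage_emb
      (MeasurableEquiv.subRight y).measurableEmbedding (𝓕 g) (Ioi (-y))
    simpa using htrans.symm
  simpa only [h.integral_fourier_comp_sub hg hgs hFg (hFgν _), add_zero] using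
    (hpole.const_mul (A : ℂ)).add hosc

end LaplaceContinuation

end LaplaceFourier

section Kernel

/-- The indicator of `(-1/2, 1/2]` modulated by the frequency `c`; its Fourier transform is the
cardinal sine centred at `c`. -/
noncomputable def modulatedBox (c : ℝ) : ℝ → ℂ :=
  (Ioc (-1 / 2) (1 / 2)).indicator fun t => (𝐞 (c * t) : ℂ)

lemma integrable_modulatedBox (c : ℝ) : Integrable (modulatedBox c) :=
  (Continuous.integrableOn_Ioc (by fun_prop)).integrable_indicator measurableSet_Ioc

lemma hasCompactSupport_modulatedBox (c : ℝ) : HasCompactSupport (modulatedBox c) :=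
  .of_support_subset_isCompact isCompact_Icc (support_indicator_subset.trans Ioc_subset_Icc_self)

lemma integral_fourierChar_mul_eq_sinc (b : ℝ) :
    ∫ t in (-1 / 2 : ℝ)..(1 / 2), (𝐞 (b * t) : ℂ) = sinc (π * b) := by
  rcases eq_or_ne b 0 with rfl | hb
  · norm_num
  have hsub := intervalIntegral.integral_comp_mul_left (a := -1 / 2) (b := 1 / 2)
    (fun t : ℝ => Complex.exp (t * Complex.I)) (c := 2 * π * b) (by positivity)
  rw [show 2 * π * b * (-1 / 2) = -(π * b) by ring, show 2 * π * b * (1 / 2) = π * b by ring,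
    integral_exp_mul_I_eq_sinc] at hsub
  calc ∫ t in (-1 / 2 : ℝ)..(1 / 2), (𝐞 (b * t) : ℂ)
      = ∫ t in (-1 / 2 : ℝ)..(1 / 2), Complex.exp ((2 * π * b * t : ℝ) * Complex.I) := by
        simp only [Real.fourierChar_apply, mul_assoc]
    _ = sinc (π * b) := by
        have hb' : (b : ℂ) ≠ 0 := by exact_mod_cast hb
        rw [hsub, Complex.real_smul]
        push_cast
        field_simp

lemma fourier_modulatedBox (c u : ℝ) : 𝓕 (modulatedBox c) u = sinc (π * (u - c)) := by
  have hmul (t : ℝ) : 𝐞 (-(t * u)) • modulatedBox c t =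
      (Ioc (-1 / 2) (1 / 2)).indicator (fun t : ℝ => (𝐞 ((c - u) * t) : ℂ)) t := by
    by_cases ht : t ∈ Ioc (-1 / 2 : ℝ) (1 / 2)
    · rw [modulatedBox, indicator_of_mem ht, indicator_of_mem ht, Circle.smul_def, smul_eq_mul,
        ← Circle.coe_mul, ← AddChar.map_add_eq_mul]
      ring_nf
    · rw [modulatedBox, indicator_of_notMem ht, indicator_of_notMem ht, smul_zero]
  rw [Real.fourier_real_eq]
  simp_rw [hmul]
  rw [integral_indicator measurableSet_Ioc, ← intervalIntegral.integral_of_le (by norm_num),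
    integral_fourierChar_mul_eq_sinc, ← neg_sub, mul_neg, sinc_neg]

/-- The tent function on `[-1, 1]` modulated by the frequency `c`, as the self-convolution of a
modulated box. -/
noncomputable def modulatedTent (c : ℝ) : ℝ → ℂ :=
  modulatedBox c ⋆[ContinuousLinearMap.mul ℂ ℂ] modulatedBox c

lemma integrable_modulatedTent (c : ℝ) : Integrable (modulatedTent c) :=
  (integrable_modulatedBox c).integrable_convolution _ (integrable_modulatedBox c)

lemma hasCompactSupport_modulatedTent (c : ℝ) : HasCompactSupport (modulatedTent c) :=
  (hasCompactSupport_modulatedBox c).convolution _ (hasCompactSupport_modulatedBox c)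

lemma fourier_modulatedTent (c u : ℝ) :
    𝓕 (modulatedTent c) u = (sinc (π * (u - c)) ^ 2 : ℝ) := by
  rw [modulatedTent, Real.fourier_mul_convolution_eq (integrable_modulatedBox c)
    (integrable_modulatedBox c), fourier_modulatedBox, ← Complex.ofReal_mul, sq]

/-- A strictly positive integrable kernel with compactly supported Fourier transform. Two translates
of `sinc²` are needed because a single one vanishes at the nonzero integers. -/
noncomputable def sincKernel (u : ℝ) : ℝ := sinc (π * u) ^ 2 + sinc (π * (u - 1 / 2)) ^ 2

/-- The compactly supported function whose Fourier transform is `sincKernel`. -/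
noncomputable def sincWindow : ℝ → ℂ := modulatedTent 0 + modulatedTent (1 / 2)

lemma integrable_sincWindow : Integrable sincWindow :=
  (integrable_modulatedTent 0).add (integrable_modulatedTent (1 / 2))

lemma hasCompactSupport_sincWindow : HasCompactSupport sincWindow :=
  (hasCompactSupport_modulatedTent 0).add (hasCompactSupport_modulatedTent (1 / 2))

lemma fourier_sincWindow (u : ℝ) : 𝓕 sincWindow u = sincKernel u := by
  calc 𝓕 sincWindow u = 𝓕 (modulatedTent 0) u + 𝓕 (modulatedTent (1 / 2)) u :=
        congrFun (VectorFourier.fourierIntegral_add Real.continuous_fourierChar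
          (by exact continuous_inner) (integrable_modulatedTent 0)
          (integrable_modulatedTent (1 / 2))) u
    _ = sincKernel u := by
        rw [fourier_modulatedTent, fourier_modulatedTent, sub_zero, sincKernel, Complex.ofReal_add]

lemma continuous_sincKernel : Continuous sincKernel := by
  unfold sincKernel
  fun_prop

lemma sq_mul_sinc_sq (x : ℝ) : x ^ 2 * sinc x ^ 2 = sin x ^ 2 := by
  rcases eq_or_ne x 0 with rfl | hx
  · simp
  · rw [sinc_of_ne_zero hx, div_pow, mul_div_cancel₀ _ (pow_ne_zero 2 hx)]

lemma sinc_sq_le_two_mul_inv (x : ℝ) : sinc x ^ 2 ≤ 2 * (1 + x ^ 2)⁻¹ := by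
  rw [← div_eq_mul_inv, le_div_iff₀ (by positivity), mul_add, mul_one, mul_comm _ (x ^ 2),
    sq_mul_sinc_sq]
  have := (sq_le_one_iff_abs_le_one _).2 (abs_sinc_le_one x)
  linarith [sin_sq_le_one x]

lemma integrable_sinc_sq : Integrable fun x => sinc x ^ 2 :=
  (integrable_inv_one_add_sq.const_mul 2).mono' (by fun_prop) <| ae_of_all _ fun x => by
    simpa using sinc_sq_le_two_mul_inv x

lemma integrable_sincKernel : Integrable sincKernel := by
  have h := integrable_sinc_sq.comp_mul_left' pi_ne_zero
  exact h.add (h.comp_sub_right (1 / 2))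

lemma one_le_sq_mul_sincKernel (u : ℝ) : 1 ≤ (π * (|u| + 1)) ^ 2 * sincKernel u := by
  have hshift : |u - 1 / 2| ≤ |u| + 1 := (abs_sub _ _).trans (by norm_num)
  have hsin : sin (π * (u - 1 / 2)) ^ 2 = cos (π * u) ^ 2 := by
    rw [show π * (u - 1 / 2) = π * u - π / 2 by ring, sin_sub_pi_div_two, neg_sq]
  calc (1 : ℝ) = (π * |u|) ^ 2 * sinc (π * u) ^ 2
        + (π * |u - 1 / 2|) ^ 2 * sinc (π * (u - 1 / 2)) ^ 2 := by
        simp only [mul_pow _ |_|, sq_abs, ← mul_pow π, sq_mul_sinc_sq, hsin, sin_sq_add_cos_sq]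
    _ ≤ (π * (|u| + 1)) ^ 2 * sincKernel u := by
        rw [sincKernel, mul_add]
        gcongr
        linarith

lemma sincKernel_pos (u : ℝ) : 0 < sincKernel u :=
  pos_of_mul_pos_right (one_pos.trans_le (one_le_sq_mul_sincKernel u)) (sq_nonneg _)

lemma exists_exp_neg_abs_le_mul_sincKernel : ∃ C, ∀ u, rexp (-|u|) ≤ C * sincKernel u := by
  refine ⟨π ^ 2 * (2 * rexp 1), fun u => ?_⟩
  have hexp : (|u| + 1) ^ 2 ≤ 2 * rexp (|u| + 1) := by
    have := Real.quadratic_le_exp_of_nonneg (x := |u| + 1) (by positivity)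
    nlinarith [abs_nonneg u]
  calc rexp (-|u|) ≤ rexp (-|u|) * ((π * (|u| + 1)) ^ 2 * sincKernel u) :=
        le_mul_of_one_le_right (exp_pos _).le (one_le_sq_mul_sincKernel u)
    _ = π ^ 2 * (rexp (-|u|) * (|u| + 1) ^ 2) * sincKernel u := by ring
    _ ≤ π ^ 2 * (rexp (-|u|) * (2 * rexp (|u| + 1))) * sincKernel u := by
        have := sincKernel_pos u
        gcongr
    _ = π ^ 2 * (2 * rexp 1) * sincKernel u := by
        rw [mul_left_comm (rexp _), ← Real.exp_add, neg_add_cancel_left]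

end Kernel

section WeakConvergence

lemma finiteMeasure_tendsto_of_tendsto_charFun {E : Type*} [NormedAddCommGroup E]
    [InnerProductSpace ℝ E] [FiniteDimensional ℝ E] [MeasurableSpace E] [BorelSpace E]
    {μ : ℕ → FiniteMeasure E} {μ₀ : FiniteMeasure E} (hμ₀ : μ₀ ≠ 0)
    (h : ∀ t, Tendsto (fun n => charFun (μ n : Measure E) t) atTop
      (𝓝 (charFun (μ₀ : Measure E) t))) : Tendsto μ atTop (𝓝 μ₀) := by
  have hmass : Tendsto (fun n => (μ n).mass) atTop (𝓝 μ₀.mass) := by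
    have h0 := (Complex.continuous_re.tendsto _).comp (h 0)
    simp only [charFun_zero, Complex.ofReal_re, Function.comp_def] at h0
    exact NNReal.tendsto_coe.1 h0
  have hmass₀ : μ₀.mass ≠ 0 := μ₀.mass_nonzero_iff.2 hμ₀
  have hcharFun {ρ : FiniteMeasure E} (hρ : ρ.mass ≠ 0) (t : E) :
      charFun (ρ.normalize : Measure E) t = ((ρ.mass⁻¹ : ℝ) : ℂ) * charFun (ρ : Measure E) t := by
    rw [ρ.toMeasure_normalize_eq_of_nonzero (ρ.mass_nonzero_iff.1 hρ), charFun_apply, charFun_apply,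
      integral_smul_nnreal_measure]
    simp [NNReal.smul_def]
  refine FiniteMeasure.tendsto_of_tendsto_normalize_testAgainstNN_of_tendsto_mass
    (ProbabilityMeasure.tendsto_of_tendsto_charFun fun t => ?_) hmass
  rw [hcharFun hmass₀]
  refine (Tendsto.mul ?_ (h t)).congr' ((hmass.eventually_ne hmass₀).mono fun n hn =>
    (hcharFun hn t).symm)
  exact (Complex.continuous_ofReal.tendsto _).comp
    ((NNReal.tendsto_coe.2 hmass).inv₀ (by exact_mod_cast hmass₀))

lemma finiteMeasure_tendsto_measure_of_null_frontier {Ω ι : Type*} {L : Filter ι}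
    [MeasurableSpace Ω] [TopologicalSpace Ω] [OpensMeasurableSpace Ω] [HasOuterApproxClosed Ω]
    {μ : ι → FiniteMeasure Ω} {μ₀ : FiniteMeasure Ω} (h : Tendsto μ L (𝓝 μ₀)) (hμ₀ : μ₀ ≠ 0)
    {s : Set Ω} (hs : μ₀ (frontier s) = 0) : Tendsto (fun i => μ i s) L (𝓝 (μ₀ s)) := by
  have : Nonempty Ω := by
    by_contra hΩ
    rw [not_nonempty_iff] at hΩ
    exact hμ₀ (FiniteMeasure.eq_of_forall_apply_eq _ _ fun s _ => by simp [Subsingleton.elim s ∅])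
  simp_rw [FiniteMeasure.self_eq_mass_mul_normalize]
  refine h.mass.mul (ProbabilityMeasure.tendsto_measure_of_null_frontier_of_tendsto
    (FiniteMeasure.tendsto_normalize_of_tendsto h hμ₀) ?_)
  rw [FiniteMeasure.normalize_eq_of_nonzero _ hμ₀, hs, mul_zero]

end WeakConvergence

section Translates

variable {ν : Measure ℝ} {A : ℝ} {k : ℝ → ℝ}
  {E : Type*} [NormedAddCommGroup E] [NormedSpace ℝ E]

/-- The translates of `ν` by `-y`, tested against `F`, converge to `A` times Lebesgue measure as
`y → ∞`. -/
def TendstoOnTranslates (ν : Measure ℝ) (A : ℝ) (F : ℝ → E) : Prop :=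
  Tendsto (fun y => ∫ x, F (x - y) ∂ν) atTop (𝓝 (A • ∫ u, F u))

/-- The translate of `ν` by `-y`, weighted by the density `k` (meant to be nonnegative; negative
values count as `0`). -/
noncomputable def weightedTranslate (ν : Measure ℝ) (k : ℝ → ℝ) (y : ℝ) : Measure ℝ :=
  (ν.map (MeasurableEquiv.subRight y)).withDensity fun u => ENNReal.ofReal (k u)

lemma isFiniteMeasure_weightedTranslate {y : ℝ} (hkν : Integrable (fun x => k (x - y)) ν) :
    IsFiniteMeasure (weightedTranslate ν k y) :=
  isFiniteMeasure_withDensity_ofReal ((integrable_map_equiv _ _).2 hkν).hasFiniteIntegral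

lemma integral_weightedTranslate (hk : Measurable k) (hk_nonneg : 0 ≤ k) (F : ℝ → E) (y : ℝ) :
    ∫ u, F u ∂(weightedTranslate ν k y) = ∫ x, k (x - y) • F (x - y) ∂ν := by
  rw [weightedTranslate, integral_withDensity_eq_integral_toReal_smul (by fun_prop)
    (ae_of_all _ fun _ => ENNReal.ofReal_lt_top), integral_map_equiv]
  congr with x
  exact congrArg (· • F (x - y)) (ENNReal.toReal_ofReal (hk_nonneg (x - y)))

lemma integral_weightedTranslate_volume (hA : 0 ≤ A) (hk : Measurable k) (hk_nonneg : 0 ≤ k)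
    (F : ℝ → E) :
    ∫ u, F u ∂(weightedTranslate (ENNReal.ofReal A • volume) k 0) = A • ∫ u, k u • F u := by
  rw [integral_weightedTranslate hk hk_nonneg, integral_smul_measure, ENNReal.toReal_ofReal hA]
  simp only [sub_zero]

lemma weightedTranslate_volume_ne_zero (hA : 0 < A) (hk : Measurable k) (hk_pos : ∀ u, 0 < k u)
    (hk_int : Integrable k) : weightedTranslate (ENNReal.ofReal A • volume) k 0 ≠ 0 := by
  intro h0
  have hzero := integral_weightedTranslate_volume hA.le hk (fun u => (hk_pos u).le)
    (fun _ => (1 : ℝ))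
  have hpos : 0 < ∫ u, k u := by
    rw [integral_pos_iff_support_of_nonneg (fun u => (hk_pos u).le) hk_int,
      Function.support_eq_univ (fun u => (hk_pos u).ne')]
    simp
  simp only [h0, integral_zero_measure, smul_eq_mul, mul_one] at hzero
  exact (mul_pos hA hpos).ne hzero

lemma tendstoOnTranslates_mul_boundedContinuous (hA : 0 < A) (hk : Measurable k)
    (hk_pos : ∀ u, 0 < k u) (hk_int : Integrable k) (hkν : ∀ y, Integrable (fun x => k (x - y)) ν)
    (h : ∀ t : ℝ, TendstoOnTranslates ν A fun u => k u • Complex.exp (t * u * Complex.I))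
    (F : ℝ →ᵇ ℝ) : TendstoOnTranslates ν A fun u => k u • F u := by
  have hk_nonneg : 0 ≤ k := fun u => (hk_pos u).le
  have hfin (y : ℝ) := isFiniteMeasure_weightedTranslate (hkν y)
  have hfin₀ : IsFiniteMeasure (weightedTranslate (ENNReal.ofReal A • volume) k 0) :=
    isFiniteMeasure_weightedTranslate (by simpa using hk_int.smul_measure ENNReal.ofReal_ne_top)
  refine tendsto_of_seq_tendsto fun y hy => ?_
  have hconv : Tendsto (β := FiniteMeasure ℝ) (fun n => ⟨weightedTranslate ν k (y n), hfin (y n)⟩)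
      atTop (𝓝 ⟨weightedTranslate (ENNReal.ofReal A • volume) k 0, hfin₀⟩) := by
    refine finiteMeasure_tendsto_of_tendsto_charFun ?_ fun t => ?_
    · exact fun h0 => weightedTranslate_volume_ne_zero hA hk hk_pos hk_int (congrArg Subtype.val h0)
    · simp only [FiniteMeasure.toMeasure_mk, charFun_apply_real,
        integral_weightedTranslate_volume hA.le hk hk_nonneg,
        integral_weightedTranslate hk hk_nonneg]
      exact (h t).comp hy
  have hF := FiniteMeasure.tendsto_iff_forall_integral_tendsto.1 hconv F
  simpa only [Function.comp_def, FiniteMeasure.toMeasure_mk,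
    integral_weightedTranslate_volume hA.le hk hk_nonneg,
    integral_weightedTranslate hk hk_nonneg] using hF

lemma tendstoOnTranslates_indicator (hA : 0 < A) (hk : Measurable k)
    (hk_pos : ∀ u, 0 < k u) (hk_int : Integrable k) (hkν : ∀ y, Integrable (fun x => k (x - y)) ν)
    (h : ∀ F : ℝ →ᵇ ℝ, TendstoOnTranslates ν A fun u => k u • F u)
    {s : Set ℝ} (hs : MeasurableSet s) (hs_frontier : volume (frontier s) = 0) :
    TendstoOnTranslates ν A (s.indicator k) := by
  have hk_nonneg : 0 ≤ k := fun u => (hk_pos u).le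
  have hfin (y : ℝ) := isFiniteMeasure_weightedTranslate (hkν y)
  have hfin₀ : IsFiniteMeasure (weightedTranslate (ENNReal.ofReal A • volume) k 0) :=
    isFiniteMeasure_weightedTranslate (by simpa using hk_int.smul_measure ENNReal.ofReal_ne_top)
  have hconv : Tendsto (β := FiniteMeasure ℝ) (fun y => ⟨weightedTranslate ν k y, hfin y⟩)
      atTop (𝓝 ⟨weightedTranslate (ENNReal.ofReal A • volume) k 0, hfin₀⟩) := by
    refine FiniteMeasure.tendsto_iff_forall_integral_tendsto.2 fun F => ?_
    simpa only [FiniteMeasure.toMeasure_mk, integral_weightedTranslate_volume hA.le hk hk_nonneg,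
      integral_weightedTranslate hk hk_nonneg, TendstoOnTranslates] using h F
  have hnull : weightedTranslate (ENNReal.ofReal A • volume) k 0 (frontier s) = 0 := by
    refine withDensity_absolutelyContinuous _ _ ?_
    rw [MeasurableEquiv.map_apply, Measure.smul_apply]
    exact ((measurePreserving_sub_right volume (0 : ℝ)).quasiMeasurePreserving.preimage_null
      hs_frontier).symm ▸ smul_zero _
  have hlim := finiteMeasure_tendsto_measure_of_null_frontier hconv
    (fun h0 => weightedTranslate_volume_ne_zero hA hk hk_pos hk_int (congrArg Subtype.val h0))
    (s := s) (by simp [hnull])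
  have hreal {μ : Measure ℝ} (hμ : IsFiniteMeasure μ) :
      (DFunLike.coe (F := FiniteMeasure ℝ) ⟨μ, hμ⟩ s : ℝ) = ∫ u, s.indicator (1 : ℝ → ℝ) u ∂μ := by
    rw [integral_indicator_one hs]
    rfl
  have hmul (u : ℝ) : k u • s.indicator (1 : ℝ → ℝ) u = s.indicator k u := by
    by_cases hu : u ∈ s <;> simp [hu]
  simpa only [← NNReal.tendsto_coe, hreal, FiniteMeasure.toMeasure_mk, hmul,
    integral_weightedTranslate_volume hA.le hk hk_nonneg, integral_weightedTranslate hk hk_nonneg,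
    TendstoOnTranslates] using hlim

end Translates

namespace LaplaceContinuation

variable {ν : Measure ℝ} {A : ℝ} {G : ℂ → ℂ}

lemma integrable_sincKernel_comp_sub (h : LaplaceContinuation ν A G) (y : ℝ) :
    Integrable (fun x => sincKernel (x - y)) ν :=
  h.integrable_kernel_comp_sub integrable_sincWindow hasCompactSupport_sincWindow
    integrable_sincKernel (fun u => (sincKernel_pos u).le) fourier_sincWindow y

lemma tendstoOnTranslates_sincKernel_smul_cexp (h : LaplaceContinuation ν A G) (t : ℝ) :
    TendstoOnTranslates ν A fun u => sincKernel u • Complex.exp (t * u * Complex.I) := by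
  set g : ℝ → ℂ := sincWindow ∘ (· + t / (2 * π))
  have hfourier : 𝓕 g = fun u : ℝ => sincKernel u • Complex.exp (t * u * Complex.I) := by
    refine (VectorFourier.fourierIntegral_comp_add_right _ _ _ _ _).trans (funext fun u => ?_)
    change 𝐞 (u * (t / (2 * π))) • 𝓕 sincWindow u = _
    rw [fourier_sincWindow, Circle.smul_def, Real.fourierChar_apply, smul_eq_mul, mul_comm,
      Complex.real_smul]
    congr 3
    push_cast
    field_simp
  have hexp : Continuous fun u : ℝ => Complex.exp (t * u * Complex.I) := by fun_prop
  have hexp_norm (u : ℝ) : ‖Complex.exp (t * u * Complex.I)‖ ≤ 1 := by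
    rw [← Complex.ofReal_mul, Complex.norm_exp_ofReal_mul_I]
  have hlim := h.tendsto_integral_fourier_comp_sub (g := g)
    (integrable_sincWindow.comp_add_right _)
    (hasCompactSupport_sincWindow.comp_homeomorph (Homeomorph.addRight (t / (2 * π))))
    (hfourier ▸ integrable_sincKernel.smul_bdd 1 hexp.aestronglyMeasurable (ae_of_all _ hexp_norm))
    (fun y => hfourier ▸ (h.integrable_sincKernel_comp_sub y).smul_bdd 1
      (by fun_prop) (ae_of_all _ fun x => hexp_norm (x - y)))
  simpa only [hfourier, TendstoOnTranslates, Complex.real_smul] using hlim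

lemma tendstoOnTranslates_of_abs_le_mul_sincKernel (h : LaplaceContinuation ν A G) {F : ℝ → ℝ}
    {C : ℝ} (hF : Continuous F) (hFC : ∀ u, |F u| ≤ C * sincKernel u) :
    TendstoOnTranslates ν A F := by
  let Φ : ℝ →ᵇ ℝ := .ofNormedAddCommGroup (fun u => F u / sincKernel u)
    (hF.div continuous_sincKernel fun u => (sincKernel_pos u).ne') C fun u => by
      rw [norm_div, norm_of_nonneg (sincKernel_pos u).le, div_le_iff₀ (sincKernel_pos u)]
      exact hFC u
  convert tendstoOnTranslates_mul_boundedContinuous h.residue_pos continuous_sincKernel.measurable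
    sincKernel_pos integrable_sincKernel h.integrable_sincKernel_comp_sub
    h.tendstoOnTranslates_sincKernel_smul_cexp Φ using 1
  funext u
  exact (mul_div_cancel₀ (F u) (sincKernel_pos u).ne').symm

lemma tendsto_setIntegral_Iic_exp_sub (h : LaplaceContinuation ν A G) :
    Tendsto (fun y => ∫ x in Iic y, rexp (x - y) ∂ν) atTop (𝓝 A) := by
  obtain ⟨C, hC⟩ := exists_exp_neg_abs_le_mul_sincKernel
  have hexp : Continuous fun u : ℝ => rexp (-|u|) := by fun_prop
  have hexpν (y : ℝ) : Integrable (fun x => rexp (-|x - y|)) ν :=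
    ((h.integrable_sincKernel_comp_sub y).const_mul C).mono' (by fun_prop)
      (ae_of_all _ fun x => by simpa using hC (x - y))
  have hind : (Iic 0).indicator (fun u => rexp (-|u|)) = (Iic 0).indicator rexp :=
    indicator_congr fun u hu => by rw [abs_of_nonpos hu, neg_neg]
  have hlim := tendstoOnTranslates_indicator h.residue_pos hexp.measurable (fun u => exp_pos _)
    ((integrable_sincKernel.const_mul C).mono' (by fun_prop)
      (ae_of_all _ fun u => by simpa using hC u)) hexpν
    (fun Φ => h.tendstoOnTranslates_of_abs_le_mul_sincKernel (C := C * ‖Φ‖)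
      (hexp.smul Φ.continuous) fun u => ?_)
    measurableSet_Iic (s := Iic 0) (by simp)
  · rw [hind, TendstoOnTranslates, integral_indicator measurableSet_Iic, integral_exp_Iic_zero,
      smul_eq_mul, mul_one] at hlim
    refine hlim.congr fun y => ?_
    rw [← integral_indicator measurableSet_Iic]
    congr with x
    simp [indicator_apply]
  · rw [smul_eq_mul, abs_mul, abs_exp, mul_right_comm]
    exact mul_le_mul (hC u) (Φ.norm_coe_le_norm u) (abs_nonneg _)
      ((exp_pos _).le.trans (hC u))

end LaplaceContinuation

section WienerIkehara

variable {f : ℕ → ℝ}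

/-- The measure with mass `f n / n` at `log n` for each `n ≥ 1` (the term `n = 0` vanishes because
`f 0 / 0 = 0`); its Laplace transform at `s` is the Dirichlet series of `f` at `1 + s`. -/
noncomputable def logMeasure (f : ℕ → ℝ) : Measure ℝ :=
  .sum fun n : ℕ => ENNReal.ofReal (f n / n) • .dirac (log n)

lemma integrable_logMeasure {E : Type*} [NormedAddCommGroup E] (hf : 0 ≤ f) {F : ℝ → E}
    (hF : Summable fun n : ℕ => f n / n * ‖F (log n)‖) : Integrable F (logMeasure f) := by
  refine integrable_sum_dirac (fun _ => ENNReal.ofReal_ne_top) (hF.congr fun n => ?_)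
  rw [ENNReal.toReal_ofReal (div_nonneg (hf n) n.cast_nonneg)]

lemma integral_logMeasure {E : Type*} [NormedAddCommGroup E] [NormedSpace ℝ E]
    [FiniteDimensional ℝ E] (hf : 0 ≤ f) (F : ℝ → E) :
    ∫ x, F x ∂(logMeasure f) = ∑' n : ℕ, (f n / n) • F (log n) := by
  rw [logMeasure, integral_sum_dirac fun _ => ENNReal.ofReal_ne_top]
  simp_rw [ENNReal.toReal_ofReal (div_nonneg (hf _) (Nat.cast_nonneg _))]

lemma ae_nonneg_logMeasure (f : ℕ → ℝ) : ∀ᵐ x ∂(logMeasure f), 0 ≤ x := by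
  refine Measure.ae_sum_iff.2 fun n => Measure.ae_smul_measure ?_ _
  simpa [ae_dirac_eq] using log_natCast_nonneg n

lemma div_smul_cexp_log_eq_term (f : ℕ → ℝ) (s : ℂ) (n : ℕ) :
    (f n / n) • Complex.exp (-(s * log n)) = LSeries.term (fun n => (f n : ℂ)) (1 + s) n := by
  rcases eq_or_ne n 0 with rfl | hn
  · simp
  · have hn' : (n : ℂ) ≠ 0 := Nat.cast_ne_zero.2 hn
    rw [LSeries.term_of_ne_zero hn, Complex.cpow_add _ _ hn', Complex.cpow_one,
      Complex.cpow_def_of_ne_zero hn', Complex.natCast_log, Complex.real_smul, Complex.exp_neg,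
      mul_comm s]
    push_cast
    field_simp

lemma laplaceContinuation_logMeasure {A : ℝ} {G : ℂ → ℂ} (hf : 0 ≤ f) (hA : 0 < A)
    (hsum : ∀ s : ℂ, 1 < s.re → LSeriesSummable (fun n => (f n : ℂ)) s)
    (hG : ContinuousOn G {s | 1 ≤ s.re})
    (hfG : ∀ s : ℂ, 1 < s.re → LSeries (fun n => (f n : ℂ)) s = A / (s - 1) + G s) :
    LaplaceContinuation (logMeasure f) A fun s => G (1 + s) where
  ae_nonneg := ae_nonneg_logMeasure f
  residue_pos := hA
  integrable_exp σ hσ := by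
    refine integrable_logMeasure hf ((hsum (1 + σ) (by simpa using hσ)).norm.congr fun n => ?_)
    rw [← div_smul_cexp_log_eq_term, norm_smul, norm_of_nonneg (div_nonneg (hf n) n.cast_nonneg),
      ← Complex.ofReal_mul, ← Complex.ofReal_neg, ← Complex.ofReal_exp, Complex.norm_real]
  continuousOn := hG.comp (by fun_prop) fun s hs => by simpa using hs
  laplace_eq s hs := by
    have hs' : 1 < (1 + s).re := by simpa using hs
    simp_rw [integral_logMeasure hf, div_smul_cexp_log_eq_term, ← LSeries.eq_1, hfG _ hs',
      add_sub_cancel_left]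

lemma setIntegral_Iic_exp_sub_logMeasure (hf : 0 ≤ f) {N : ℕ} (hN : N ≠ 0) :
    ∫ x in Iic (log N), rexp (x - log N) ∂(logMeasure f) = (∑ n ∈ Finset.Ioc 0 N, f n) / N := by
  have hN' : (0 : ℝ) < N := by positivity
  have hterm (n : ℕ) : (f n / n) • (Iic (log N)).indicator (fun x => rexp (x - log N)) (log n) =
      if n ∈ Finset.Ioc 0 N then f n / N else 0 := by
    rcases Nat.eq_zero_or_pos n with rfl | hn
    · simp
    have hn' : (0 : ℝ) < n := by positivity
    simp only [indicator_apply, mem_Iic, log_le_log_iff hn' hN', Nat.cast_le, Finset.mem_Ioc, hn,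
      true_and, exp_sub, exp_log hn', exp_log hN', smul_eq_mul]
    split_ifs
    · field_simp
    · exact mul_zero _
  rw [← integral_indicator measurableSet_Iic, integral_logMeasure hf, Finset.sum_div]
  simp_rw [hterm]
  rw [tsum_eq_sum (s := Finset.Ioc 0 N) fun n hn => if_neg hn]
  exact Finset.sum_congr rfl fun n hn => if_pos hn

theorem wiener_ikehara {A : ℝ} {G : ℂ → ℂ} (hf : 0 ≤ f) (hA : 0 < A)
    (hsum : ∀ s : ℂ, 1 < s.re → LSeriesSummable (fun n => (f n : ℂ)) s)
    (hG : ContinuousOn G {s | 1 ≤ s.re})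
    (hfG : ∀ s : ℂ, 1 < s.re → LSeries (fun n => (f n : ℂ)) s = A / (s - 1) + G s) :
    Tendsto (fun N : ℕ => (∑ n ∈ Finset.Ioc 0 N, f n) / N) atTop (𝓝 A) := by
  refine ((laplaceContinuation_logMeasure hf hA hsum hG hfG).tendsto_setIntegral_Iic_exp_sub.comp
    (tendsto_log_atTop.comp tendsto_natCast_atTop_atTop)).congr' ?_
  filter_upwards [eventually_ne_atTop 0] with N hN
  exact setIntegral_Iic_exp_sub_logMeasure hf hN

end WienerIkehara

/-- Chebyshev's function of a residue class, `θ(N; m, a) = ∑ log p` over the primes `p ≤ N` with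
`p ≡ a (mod m)`. -/
noncomputable def thetaResidue {m : ℕ} (a : ZMod m) (N : ℕ) : ℝ :=
  ∑ p ∈ N.primesLE with ((p : ℕ) : ZMod m) = a, log p

section PrimesInProgressions

variable {m : ℕ} {a : ZMod m} {N : ℕ}

lemma thetaResidue_nonneg : 0 ≤ thetaResidue a N :=
  Finset.sum_nonneg fun p _ => log_natCast_nonneg p

lemma thetaResidue_zmod_one (a : ZMod 1) : thetaResidue a N = ∑ p ∈ N.primesLE, log p := by
  rw [thetaResidue, Finset.filter_true_of_mem fun _ _ => Subsingleton.elim _ _]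

open ArithmeticFunction ArithmeticFunction.vonMangoldt

lemma sum_residueClass_sub_thetaResidue :
    ∑ n ∈ Finset.Ioc 0 N, residueClass a n - thetaResidue a N =
      ∑ n ∈ Finset.Ioc 0 N with ¬ n.Prime, residueClass a n := by
  rw [sub_eq_iff_eq_add', ← Finset.sum_filter_add_sum_filter_not _ Nat.Prime, thetaResidue,
    Nat.primesLE_eq_filter_Ioc_zero, Finset.sum_filter (s := {n ∈ Finset.Ioc 0 N | n.Prime})]
  congr 1
  refine Finset.sum_congr rfl fun p hp => ?_
  simp only [residueClass, Set.indicator_apply, Set.mem_ofPred_eq,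
    vonMangoldt_apply_prime (Finset.mem_filter.1 hp).2]

lemma abs_sum_residueClass_sub_thetaResidue_le :
    |∑ n ∈ Finset.Ioc 0 N, residueClass a n - thetaResidue a N| ≤
      Chebyshev.psi N - Chebyshev.theta N := by
  rw [sum_residueClass_sub_thetaResidue, Chebyshev.psi_sub_theta_eq_sum_not_prime,
    Nat.floor_natCast, abs_of_nonneg (Finset.sum_nonneg fun n _ => residueClass_nonneg a n)]
  exact Finset.sum_le_sum fun n _ => residueClass_le a n

lemma tendsto_psi_sub_theta_div :
    Tendsto (fun N : ℕ => (Chebyshev.psi N - Chebyshev.theta N) / N) atTop (𝓝 0) := by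
  have hsqrt : (sqrt : ℝ → ℝ) =o[atTop] (id : ℝ → ℝ) := by
    refine Asymptotics.isLittleO_of_tendsto (by simp +contextual) ?_
    simpa only [id_eq, sqrt_div_self] using! tendsto_inv_atTop_zero.comp tendsto_sqrt_atTop
  exact (Chebyshev.isBigO_psi_sub_theta_sqrt.trans_isLittleO hsqrt).tendsto_div_nhds_zero.comp
    tendsto_natCast_atTop_atTop

theorem tendsto_thetaResidue_div [NeZero m] (ha : IsUnit a) :
    Tendsto (fun N : ℕ => thetaResidue a N / N) atTop (𝓝 (m.totient : ℝ)⁻¹) := by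
  have hres : Tendsto (fun N : ℕ => (∑ n ∈ Finset.Ioc 0 N, residueClass a n) / N) atTop
      (𝓝 (m.totient : ℝ)⁻¹) := by
    refine wiener_ikehara (residueClass_nonneg a)
      (inv_pos.2 (Nat.cast_pos.2 (Nat.totient_pos.2 (NeZero.pos m))))
      (fun s hs => LSeriesSummable_of_abscissaOfAbsConv_lt_re
        ((abscissaOfAbsConv_residueClass_le_one a).trans_lt (mod_cast hs)))
      (continuousOn_LFunctionResidueClassAux a) fun s hs => ?_
    rw [eqOn_LFunctionResidueClassAux ha hs]
    push_cast
    ring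
  have herr : Tendsto (fun N : ℕ => (∑ n ∈ Finset.Ioc 0 N, residueClass a n - thetaResidue a N) / N)
      atTop (𝓝 0) := by
    refine squeeze_zero_norm (fun N => ?_) tendsto_psi_sub_theta_div
    rw [norm_div, norm_natCast, norm_eq_abs]
    gcongr
    exact abs_sum_residueClass_sub_thetaResidue_le
  simpa [sub_div] using hres.sub herr

end PrimesInProgressions

section ChebyshevBound

open scoped Nat

lemma factorization_factorial_le {p : ℕ} (hp : p.Prime) (M : ℕ) : (M !).factorization p ≤ M :=
  (Nat.factorization_factorial_le_div_pred hp M).trans (Nat.div_le_self _ _)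

-- Modulo a prime power coprime to `e`, the progression is `e ^ M` times `M` consecutive integers.
lemma factorial_dvd_pow_mul_prod_add (e a M : ℕ) :
    M ! ∣ e ^ M * ∏ i ∈ Finset.range M, (e * i + a) := by
  rw [Nat.dvd_iff_prime_pow_dvd_dvd]
  intro p k hp hk
  by_cases hpe : p ∣ e
  · have hkM : k ≤ M := ((hp.pow_dvd_iff_le_factorization M.factorial_ne_zero).1 hk).trans
      (factorization_factorial_le hp M)
    exact ((pow_dvd_pow p hkM).trans (pow_dvd_pow_of_dvd hpe M)).mul_right _
  · have he : IsUnit (e : ZMod (p ^ k)) :=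
      (ZMod.isUnit_iff_coprime e _).2 (((hp.coprime_iff_not_dvd.2 hpe).symm).pow_right k)
    have : NeZero (p ^ k) := ⟨pow_ne_zero k hp.ne_zero⟩
    obtain ⟨x, hx⟩ : ∃ x, (e : ZMod (p ^ k)) * x = a :=
      ⟨he.unit⁻¹ * a, by rw [← mul_assoc, he.mul_val_inv, one_mul]⟩
    obtain ⟨r, rfl⟩ := ZMod.natCast_zmod_surjective x
    have hprod : ((∏ i ∈ Finset.range M, (e * i + a) : ℕ) : ZMod (p ^ k)) =
        e ^ M * (r.ascFactorial M : ℕ) := by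
      rw [Nat.ascFactorial_eq_prod_range, ← Finset.card_range M, ← Finset.prod_const,
        Finset.card_range, Nat.cast_prod, Nat.cast_prod, ← Finset.prod_mul_distrib]
      refine Finset.prod_congr rfl fun i _ => ?_
      push_cast
      linear_combination -hx
    refine Dvd.dvd.mul_left ?_ _
    rw [← ZMod.natCast_eq_zero_iff, hprod,
      (ZMod.natCast_eq_zero_iff _ _).2 (hk.trans (Nat.factorial_dvd_ascFactorial r M)), mul_zero]

lemma natCast_zmod_eq_one_iff {p : ℕ} (m : ℕ) (hp : 1 ≤ p) : (p : ZMod m) = 1 ↔ m ∣ p - 1 := by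
  rw [← ZMod.natCast_eq_zero_iff, Nat.cast_sub hp, sub_eq_zero, Nat.cast_one]

lemma exists_eq_mul_succ_add_one {e p N : ℕ} (hp : p.Prime) (hpN : p ≤ N)
    (hpe : (p : ZMod e) = 1) : ∃ i < N / e, p = e * i + (e + 1) := by
  obtain ⟨c, hc⟩ := (natCast_zmod_eq_one_iff e hp.one_le).1 hpe
  have hp1 := hp.one_lt
  obtain ⟨i, rfl⟩ : ∃ i, c = i + 1 := Nat.exists_eq_add_one_of_ne_zero (by rintro rfl; omega)
  have he : 0 < e := Nat.pos_of_ne_zero (by rintro rfl; omega)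
  refine ⟨i, ?_, ?_⟩
  · rw [Nat.lt_iff_add_one_le, Nat.le_div_iff_mul_le he, mul_comm]
    omega
  · rw [mul_add] at hc
    omega

lemma prod_primes_eq_one_mod_le {e : ℕ} (he : 0 < e) (N : ℕ) :
    ∏ p ∈ N.primesLE with ((p : ℕ) : ZMod e) = 1 ∧ N / e < p, p ≤ (2 * e ^ 2) ^ (N / e) := by
  set M := N / e
  obtain ⟨Q, hQ⟩ := factorial_dvd_pow_mul_prod_add e (e + 1) M
  have hdvd : ∏ p ∈ N.primesLE with ((p : ℕ) : ZMod e) = 1 ∧ M < p, p ∣ Q := by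
    refine Finset.prod_primes_dvd _ (fun p hp => ?_) fun p hp => ?_ <;>
      obtain ⟨hpN, hpe, hMp⟩ := Finset.mem_filter.1 hp
    · exact (Nat.prime_of_mem_primesLE hpN).prime
    · have hpp := Nat.prime_of_mem_primesLE hpN
      obtain ⟨i, hi, hpi⟩ := exists_eq_mul_succ_add_one hpp (Nat.le_of_mem_primesLE hpN) hpe
      have hpQ : p ∣ M ! * Q := by
        rw [← hQ, hpi]
        exact (Finset.dvd_prod_of_mem _ (Finset.mem_range.2 hi)).mul_left _
      exact (hpp.dvd_mul.1 hpQ).resolve_left fun h => hMp.not_ge (hpp.dvd_factorial.1 h)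
  have hQpos : 0 < Q := by
    refine Nat.pos_of_mul_pos_left (a := M !) ?_
    rw [← hQ]
    positivity
  refine (Nat.le_of_dvd hQpos hdvd).trans (le_of_mul_le_mul_left ?_ M.factorial_pos)
  calc M ! * Q = e ^ M * ∏ i ∈ Finset.range M, (e * i + (e + 1)) := hQ.symm
    _ ≤ e ^ M * ∏ i ∈ Finset.range M, (2 * e * (i + 1)) := by
      gcongr with i
      nlinarith
    _ = M ! * (2 * e ^ 2) ^ M := by
      rw [Finset.prod_mul_distrib, Finset.prod_range_add_one_eq_factorial, Finset.prod_const,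
        Finset.card_range]
      ring

lemma thetaResidue_one_le_add {e : ℕ} (he : 2 ≤ e) (N : ℕ) :
    thetaResidue (1 : ZMod e) N ≤
      thetaResidue (1 : ZMod e) (N / e) + 3 * log e * (N / e : ℕ) := by
  have hsplit : thetaResidue (1 : ZMod e) N = thetaResidue (1 : ZMod e) (N / e) +
      ∑ p ∈ N.primesLE with ((p : ℕ) : ZMod e) = 1 ∧ N / e < p, log p := by
    rw [thetaResidue, ← Finset.sum_filter_not_add_sum_filter _ (fun p => N / e < p),
      Finset.filter_filter, Finset.filter_filter, thetaResidue]
    congr 2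
    ext p
    have := Nat.div_le_self N e
    simp only [Finset.mem_filter, Nat.mem_primesLE, not_lt]
    grind
  have hprod : ∑ p ∈ N.primesLE with ((p : ℕ) : ZMod e) = 1 ∧ N / e < p, log p ≤
      3 * log e * (N / e : ℕ) := by
    have hpos : ∀ p ∈ {p ∈ N.primesLE | ((p : ℕ) : ZMod e) = 1 ∧ N / e < p}, (0 : ℝ) < p :=
      fun p hp => mod_cast (Nat.prime_of_mem_primesLE (Finset.mem_filter.1 hp).1).pos
    rw [← log_prod fun p hp => (hpos p hp).ne']
    calc log (∏ p ∈ N.primesLE with ((p : ℕ) : ZMod e) = 1 ∧ N / e < p, (p : ℝ))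
        ≤ log (((e : ℝ) ^ 3) ^ (N / e)) := by
          refine log_le_log (Finset.prod_pos hpos) ?_
          have h := (prod_primes_eq_one_mod_le (two_pos.trans_le he) N).trans
            (Nat.pow_le_pow_left (show 2 * e ^ 2 ≤ e ^ 3 by nlinarith [sq_nonneg e]) _)
          rw [← Nat.cast_prod]
          exact_mod_cast h
      _ = 3 * log e * (N / e : ℕ) := by
          rw [log_pow, log_pow]
          push_cast
          ring
  linarith

lemma thetaResidue_one_le_of_two_le {e : ℕ} (he : 2 ≤ e) (N : ℕ) :
    thetaResidue (1 : ZMod e) N ≤ 6 * log e / e * N := by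
  induction N using Nat.strong_induction_on with
  | _ N ih =>
    rcases Nat.eq_zero_or_pos N with rfl | hN
    · simp [thetaResidue]
    have heR : (2 : ℝ) ≤ e := mod_cast he
    calc thetaResidue (1 : ZMod e) N
        ≤ thetaResidue (1 : ZMod e) (N / e) + 3 * log e * (N / e : ℕ) :=
          thetaResidue_one_le_add he N
      _ ≤ 6 * log e / 2 * (N / e : ℕ) + 3 * log e * (N / e : ℕ) := by
          gcongr
          refine (ih _ (Nat.div_lt_self hN he)).trans ?_
          gcongr
      _ = 6 * log e * (N / e : ℕ) := by ring
      _ ≤ 6 * log e * (N / e) := by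
          gcongr
          exact Nat.cast_div_le
      _ = 6 * log e / e * N := by ring

theorem thetaResidue_one_le {m : ℕ} (hm : m ≠ 0) (N : ℕ) :
    thetaResidue (1 : ZMod m) N ≤ 6 * (1 + log m) / m * N := by
  obtain rfl | h2 : m = 1 ∨ 2 ≤ m := by omega
  · have hlog4 : log 4 ≤ 6 := (log_le_sub_one_of_pos (by norm_num)).trans (by norm_num)
    rw [thetaResidue_zmod_one, ← Chebyshev.theta_eq_sum_primesLE_log]
    calc Chebyshev.theta N ≤ log 4 * N := Chebyshev.theta_le_log4_mul_x N.cast_nonneg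
      _ ≤ 6 * (1 + log (1 : ℕ)) / (1 : ℕ) * N := by
        simp only [Nat.cast_one, log_one, add_zero, mul_one, div_one]
        gcongr
  · refine (thetaResidue_one_le_of_two_le h2 N).trans ?_
    gcongr
    linarith

end ChebyshevBound

section DivisorSumsAtShiftedPrimes

variable {h : ℕ → ℝ} {N : ℕ}

lemma thetaResidue_one_eq_sum_ite (m : ℕ) :
    thetaResidue (1 : ZMod m) N = ∑ p ∈ N.primesLE, if m ∣ p - 1 then log p else 0 := by
  rw [thetaResidue, Finset.sum_filter]
  refine Finset.sum_congr rfl fun p hp => ?_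
  simp only [natCast_zmod_eq_one_iff m (Nat.prime_of_mem_primesLE hp).one_le]

lemma thetaResidue_one_eq_zero {m : ℕ} (hm : m = 0 ∨ N ≤ m) : thetaResidue (1 : ZMod m) N = 0 := by
  rw [thetaResidue_one_eq_sum_ite]
  refine Finset.sum_eq_zero fun p hp => if_neg fun hmp => ?_
  have hp1 := Nat.one_lt_of_mem_primesLE hp
  have hpN := Nat.le_of_mem_primesLE hp
  have := Nat.le_of_dvd (by omega) hmp
  have := Nat.pos_of_dvd_of_pos hmp (by omega)
  omega

lemma sum_primesLE_log_mul_sum_divisors (h : ℕ → ℝ) (N : ℕ) :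
    ∑ p ∈ N.primesLE, log p * ∑ d ∈ (p - 1).divisors, h d =
      ∑' m : ℕ, h m * thetaResidue (1 : ZMod m) N := by
  have hdiv : ∀ p ∈ N.primesLE, (p - 1).divisors = {m ∈ Finset.range N | m ∣ p - 1} := by
    intro p hp
    have hpN := Nat.le_of_mem_primesLE hp
    have hp1 := Nat.one_lt_of_mem_primesLE hp
    ext m
    simp only [Nat.mem_divisors, Finset.mem_filter, Finset.mem_range]
    constructor
    · rintro ⟨hm, hp0⟩
      have := Nat.le_of_dvd (Nat.pos_of_ne_zero hp0) hm
      exact ⟨by omega, hm⟩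
    · rintro ⟨-, hm⟩
      exact ⟨hm, by omega⟩
  calc ∑ p ∈ N.primesLE, log p * ∑ d ∈ (p - 1).divisors, h d
      = ∑ p ∈ N.primesLE, ∑ m ∈ Finset.range N, h m * if m ∣ p - 1 then log p else 0 := by
        refine Finset.sum_congr rfl fun p hp => ?_
        rw [hdiv p hp, Finset.sum_filter, Finset.mul_sum]
        refine Finset.sum_congr rfl fun m _ => ?_
        split_ifs <;> ring
    _ = ∑ m ∈ Finset.range N, h m * thetaResidue (1 : ZMod m) N := by
        simp only [thetaResidue_one_eq_sum_ite, Finset.mul_sum]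
        exact Finset.sum_comm
    _ = ∑' m : ℕ, h m * thetaResidue (1 : ZMod m) N := by
        refine (tsum_eq_sum fun m hm => ?_).symm
        rw [thetaResidue_one_eq_zero (.inr (not_lt.1 (Finset.mem_range.not.1 hm))), mul_zero]

lemma thetaResidue_one_div_le (m N : ℕ) :
    thetaResidue (1 : ZMod m) N / N ≤ 6 * ((1 + log m) / m) := by
  rcases eq_or_ne m 0 with rfl | hm
  · simp [thetaResidue_one_eq_zero]
  · rw [← mul_div_assoc]
    exact div_le_of_le_mul₀ N.cast_nonneg (by positivity) (thetaResidue_one_le hm N)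

lemma inv_totient_le (m : ℕ) : (m.totient : ℝ)⁻¹ ≤ 6 * ((1 + log m) / m) := by
  rcases eq_or_ne m 0 with rfl | hm
  · simp
  · have : NeZero m := ⟨hm⟩
    exact le_of_tendsto' (tendsto_thetaResidue_div isUnit_one) (thetaResidue_one_div_le m)

theorem tendsto_sum_primesLE_log_mul_sum_divisors_div
    (hh : Summable fun m : ℕ => |h m| * ((1 + log m) / m)) :
    Tendsto (fun N : ℕ => (∑ p ∈ N.primesLE, log p * ∑ d ∈ (p - 1).divisors, h d) / N) atTop
      (𝓝 (∑' m : ℕ, h m * (m.totient : ℝ)⁻¹)) := by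
  simp only [sum_primesLE_log_mul_sum_divisors, ← tsum_div_const, mul_div_assoc]
  refine tendsto_tsum_of_dominated_convergence (hh.mul_left 6) (fun m => ?_)
    (Eventually.of_forall fun N m => ?_)
  · rcases eq_or_ne m 0 with rfl | hm
    · simp [thetaResidue_one_eq_zero]
    · have : NeZero m := ⟨hm⟩
      exact (tendsto_thetaResidue_div isUnit_one).const_mul _
  · rw [norm_mul, norm_eq_abs, norm_of_nonneg (div_nonneg thetaResidue_nonneg N.cast_nonneg),
      mul_left_comm]
    exact mul_le_mul_of_nonneg_left (thetaResidue_one_div_le m N) (abs_nonneg _)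

end DivisorSumsAtShiftedPrimes

section StephensMoebius

open ArithmeticFunction hiding log
open ArithmeticFunction.zeta ArithmeticFunction.Moebius

/-- The Möbius transform of `n ↦ 𝒮(n) / n²`, in the factored form `(μ / id) * id⁻²`. -/
noncomputable def stephensMoebius : ArithmeticFunction ℝ :=
  pdiv (μ : ArithmeticFunction ℝ) (ArithmeticFunction.id : ArithmeticFunction ℝ) *
    pdiv (ζ : ArithmeticFunction ℝ) (pow 2 : ArithmeticFunction ℝ)

lemma isMultiplicative_stephensMoebius : stephensMoebius.IsMultiplicative :=
  (isMultiplicative_moebius.intCast.pdiv isMultiplicative_id.natCast).mul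
    (isMultiplicative_zeta.natCast.pdiv isMultiplicative_pow.natCast)

lemma stephensMoebius_apply (n : ℕ) :
    stephensMoebius n = ∑ x ∈ n.divisorsAntidiagonal, μ x.1 / (x.1 * x.2 ^ 2 : ℝ) := by
  rw [stephensMoebius, ArithmeticFunction.mul_apply]
  refine Finset.sum_congr rfl fun x hx => ?_
  have hx2 : x.2 ≠ 0 := (Nat.ne_zero_of_mem_divisorsAntidiagonal hx).2
  simp only [pdiv_apply, intCoe_apply, natCoe_apply, id_apply, pow_apply, zeta_apply, hx2,
    and_false, if_false, Nat.cast_pow, Nat.cast_one]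
  rw [div_mul_div_comm, mul_one]

lemma pdiv_moebius_id_mul_zeta (n : ℕ) :
    (pdiv (μ : ArithmeticFunction ℝ) (ArithmeticFunction.id : ArithmeticFunction ℝ) * ζ) n =
      n.totient / n := by
  rcases Nat.eq_zero_or_pos n with rfl | hn
  · simp
  have htot : ∑ x ∈ n.divisorsAntidiagonal, (μ x.1 : ℝ) * x.2 = n.totient :=
    (sum_eq_iff_sum_mul_moebius_eq (f := fun n => (n.totient : ℝ)) (g := fun n => (n : ℝ))).1
      (fun n _ => mod_cast Nat.sum_totient n) n hn
  rw [ArithmeticFunction.mul_apply, ← htot, Finset.sum_div]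
  refine Finset.sum_congr rfl fun x hx => ?_
  obtain ⟨hx1, hx2⟩ := Nat.ne_zero_of_mem_divisorsAntidiagonal hx
  simp only [pdiv_apply, intCoe_apply, natCoe_apply, id_apply, zeta_apply, hx2, if_false,
    ← (Nat.mem_divisorsAntidiagonal.1 hx).1, Nat.cast_mul, Nat.cast_one]
  field_simp

lemma sum_divisors_stephensMoebius (n : ℕ) :
    ∑ d ∈ n.divisors, stephensMoebius d = stephensSum n / (n : ℝ) ^ 2 := by
  rw [← coe_mul_zeta_apply, stephensMoebius, mul_right_comm, ArithmeticFunction.mul_apply,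
    stephensSum, Nat.cast_sum, Finset.sum_div,
    ← Nat.sum_divisorsAntidiagonal (fun d _ => ((d * d.totient : ℕ) : ℝ) / (n : ℝ) ^ 2)]
  refine Finset.sum_congr rfl fun x hx => ?_
  obtain ⟨hx1, hx2⟩ := Nat.ne_zero_of_mem_divisorsAntidiagonal hx
  simp only [pdiv_moebius_id_mul_zeta, pdiv_apply, natCoe_apply, pow_apply, zeta_apply, hx2,
    and_false, if_false, ← (Nat.mem_divisorsAntidiagonal.1 hx).1, Nat.cast_mul, Nat.cast_pow,
    Nat.cast_one]
  field_simp

lemma stephensMoebius_prime_pow_succ {p : ℕ} (hp : p.Prime) (a : ℕ) :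
    stephensMoebius (p ^ (a + 1)) = (1 - p) / (p : ℝ) ^ (2 * (a + 1)) := by
  have hp0 : (p : ℝ) ≠ 0 := mod_cast hp.ne_zero
  rw [stephensMoebius_apply, Nat.sum_divisorsAntidiagonal (fun d e => μ d / (d * e ^ 2 : ℝ)),
    Nat.sum_divisors_prime_pow hp, Finset.sum_range_succ', Finset.sum_range_succ',
    Finset.sum_eq_zero fun i _ => ?_]
  · rw [zero_add, pow_one, pow_zero, moebius_apply_prime hp, moebius_apply_one, Nat.div_one,
      pow_succ p a, Nat.mul_div_cancel _ hp.pos]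
    push_cast
    field_simp
    ring
  · rw [moebius_apply_prime_pow hp (by omega), if_neg (by omega), Int.cast_zero, zero_div]

lemma abs_stephensMoebius_le (n : ℕ) : |stephensMoebius n| ≤ (1 + log n) / n := by
  rw [stephensMoebius_apply]
  calc |∑ x ∈ n.divisorsAntidiagonal, μ x.1 / (x.1 * x.2 ^ 2 : ℝ)|
      ≤ ∑ x ∈ n.divisorsAntidiagonal, (x.2 : ℝ)⁻¹ / n := by
        refine (Finset.abs_sum_le_sum_abs _ _).trans (Finset.sum_le_sum fun x hx => ?_)
        have hμ : |(μ x.1 : ℝ)| ≤ 1 := mod_cast abs_moebius_le_one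
        rw [← (Nat.mem_divisorsAntidiagonal.1 hx).1, abs_div,
          abs_of_nonneg (show (0 : ℝ) ≤ x.1 * x.2 ^ 2 by positivity), inv_eq_one_div, div_div,
          Nat.cast_mul, mul_left_comm, ← sq]
        exact div_le_div_of_nonneg_right hμ (by positivity)
    _ = (∑ d ∈ n.divisors, (d : ℝ)⁻¹) / n := by
        rw [← Finset.sum_div, Nat.sum_divisorsAntidiagonal' fun _ d => (d : ℝ)⁻¹]
    _ ≤ (harmonic n : ℝ) / n := by
        rw [harmonic_eq_sum_Icc]
        push_cast
        gcongr
        intro d hd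
        exact Finset.mem_Icc.2 ⟨Nat.pos_of_mem_divisors hd, Nat.divisor_le hd⟩
    _ ≤ (1 + log n) / n := by
        gcongr
        exact harmonic_le_one_add_log n

lemma summable_one_add_log_div_sq : Summable fun m : ℕ => ((1 + log m) / m) ^ 2 := by
  refine Summable.of_nonneg_of_le (fun m => sq_nonneg _) (fun m => ?_)
    ((summable_nat_rpow.2 (show (-(3 / 2) : ℝ) < -1 by norm_num)).mul_left 16)
  rcases Nat.eq_zero_or_pos m with rfl | hm
  · simp
  have hm0 : (0 : ℝ) < m := mod_cast hm
  have hlog : 1 + log m ≤ 4 * (m : ℝ) ^ (1 / 4 : ℝ) := by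
    have := log_le_sub_one_of_pos (rpow_pos_of_pos hm0 (1 / 4))
    rw [log_rpow hm0] at this
    linarith
  calc ((1 + log m) / m) ^ 2 ≤ (4 * (m : ℝ) ^ (1 / 4 : ℝ) / m) ^ 2 := by gcongr
    _ = 16 * (m : ℝ) ^ (-(3 / 2) : ℝ) := by
      rw [mul_div_assoc, ← rpow_sub_one hm0.ne', mul_pow, ← rpow_mul_natCast hm0.le]
      norm_num

lemma summable_abs_stephensMoebius_mul :
    Summable fun m : ℕ => |stephensMoebius m| * ((1 + log m) / m) := by
  refine Summable.of_nonneg_of_le (fun m => by positivity) (fun m => ?_)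
    summable_one_add_log_div_sq
  rw [sq]
  gcongr
  exact abs_stephensMoebius_le m

lemma summable_stephensMoebius_mul_inv_totient :
    Summable fun m : ℕ => ‖stephensMoebius m * (m.totient : ℝ)⁻¹‖ := by
  refine Summable.of_nonneg_of_le (fun m => norm_nonneg _) (fun m => ?_)
    (summable_abs_stephensMoebius_mul.mul_left 6)
  rw [norm_mul, norm_eq_abs, norm_of_nonneg (by positivity), mul_left_comm]
  gcongr
  exact inv_totient_le m

lemma hasSum_stephensMoebius_prime_pow {p : ℕ} (hp : p.Prime) :
    HasSum (fun a : ℕ => stephensMoebius (p ^ a) * ((p ^ a).totient : ℝ)⁻¹)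
      (1 - p / ((p : ℝ) ^ 3 - 1)) := by
  have hp1 : (1 : ℝ) < p := mod_cast hp.one_lt
  have hp0 : (p : ℝ) ≠ 0 := by positivity
  have hp3 : 1 < (p : ℝ) ^ 3 := one_lt_pow₀ hp1 three_ne_zero
  have hterm (a : ℕ) : stephensMoebius (p ^ (a + 1)) * ((p ^ (a + 1)).totient : ℝ)⁻¹ =
      -((p : ℝ) ^ 2)⁻¹ * (((p : ℝ) ^ 3)⁻¹) ^ a := by
    have hp' : (p : ℝ) - 1 ≠ 0 := sub_ne_zero.2 hp1.ne'
    rw [stephensMoebius_prime_pow_succ hp, Nat.totient_prime_pow_succ hp, Nat.cast_mul,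
      Nat.cast_pred hp.pos, inv_pow, ← pow_mul]
    push_cast
    field_simp
    ring
  have hp3' : (p : ℝ) ^ 3 - 1 ≠ 0 := sub_ne_zero.2 hp3.ne'
  have hvalue : 1 - p / ((p : ℝ) ^ 3 - 1) -
      ∑ a ∈ Finset.range 1, stephensMoebius (p ^ a) * ((p ^ a).totient : ℝ)⁻¹ =
        -((p : ℝ) ^ 2)⁻¹ * (1 - ((p : ℝ) ^ 3)⁻¹)⁻¹ := by
    rw [Finset.sum_range_one, pow_zero, isMultiplicative_stephensMoebius.map_one,
      Nat.totient_one, Nat.cast_one]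
    field_simp
    ring
  rw [← hasSum_nat_add_iff' 1, hvalue]
  simp only [hterm]
  exact (hasSum_geometric_of_lt_one (by positivity) (inv_lt_one_of_one_lt₀ hp3)).mul_left _

theorem tsum_stephensMoebius_mul_inv_totient :
    ∑' m : ℕ, stephensMoebius m * (m.totient : ℝ)⁻¹ = stephensConstant := by
  have hprod := EulerProduct.eulerProduct_hasProd
    (f := fun m => stephensMoebius m * (m.totient : ℝ)⁻¹)
    (by simp [isMultiplicative_stephensMoebius.map_one])
    (fun {m n} hmn => by
      rw [isMultiplicative_stephensMoebius.map_mul_of_coprime hmn, Nat.totient_mul hmn]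
      push_cast
      ring)
    summable_stephensMoebius_mul_inv_totient (by simp)
  rw [← hprod.tprod_eq, stephensConstant]
  exact tprod_congr fun p => (hasSum_stephensMoebius_prime_pow p.2).tsum_eq

theorem tendsto_sum_primesLE_log_mul_stephensSum_div :
    Tendsto (fun N : ℕ =>
      (∑ p ∈ N.primesLE, log p * (stephensSum (p - 1) / ((p - 1 : ℕ) : ℝ) ^ 2)) / N) atTop
      (𝓝 stephensConstant) := by
  simpa only [sum_divisors_stephensMoebius, tsum_stephensMoebius_mul_inv_totient] using
    tendsto_sum_primesLE_log_mul_sum_divisors_div summable_abs_stephensMoebius_mul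

end StephensMoebius

section WeightedMeans

variable {a b w : ℕ → ℝ}

lemma abs_sum_mul_le_of_monotone (hw : Monotone w) (hw0 : 0 ≤ w) {B : ℝ} {N : ℕ}
    (hB : ∀ n ≤ N, |∑ i ∈ Finset.range (n + 1), a i| ≤ B) :
    |∑ n ∈ Finset.range (N + 1), w n * a n| ≤ 2 * B * w N := by
  have hparts : ∑ n ∈ Finset.range (N + 1), w n * a n =
      w N * (∑ i ∈ Finset.range (N + 1), a i) -
        ∑ n ∈ Finset.range N, (w (n + 1) - w n) * ∑ i ∈ Finset.range (n + 1), a i :=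
    Finset.sum_range_by_parts w a (N + 1)
  have hsum : |∑ n ∈ Finset.range N, (w (n + 1) - w n) * ∑ i ∈ Finset.range (n + 1), a i| ≤
      (w N - w 0) * B := by
    rw [← Finset.sum_range_sub, Finset.sum_mul]
    refine (Finset.abs_sum_le_sum_abs _ _).trans (Finset.sum_le_sum fun n hn => ?_)
    have hwn : 0 ≤ w (n + 1) - w n := sub_nonneg.2 (hw n.le_succ)
    rw [abs_mul, abs_of_nonneg hwn]
    exact mul_le_mul_of_nonneg_left (hB n (Finset.mem_range.1 hn).le) hwn
  have hlast : |w N * ∑ i ∈ Finset.range (N + 1), a i| ≤ w N * B := by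
    rw [abs_mul, abs_of_nonneg (hw0 N)]
    exact mul_le_mul_of_nonneg_left (hB N le_rfl) (hw0 N)
  have hB0 : 0 ≤ w 0 * B := mul_nonneg (hw0 0) ((abs_nonneg _).trans (hB N le_rfl))
  rw [hparts]
  linarith [abs_sub (w N * ∑ i ∈ Finset.range (N + 1), a i)
    (∑ n ∈ Finset.range N, (w (n + 1) - w n) * ∑ i ∈ Finset.range (n + 1), a i)]

lemma exists_forall_abs_le_mul_add {f : ℕ → ℝ} (hf : Tendsto (fun N : ℕ => f N / N) atTop (𝓝 0))
    {ε : ℝ} (hε : 0 < ε) : ∃ C, ∀ N : ℕ, |f N| ≤ ε * N + C := by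
  obtain ⟨N₀, hN₀⟩ := eventually_atTop.1 (hf.abs.eventually_lt_const (by simpa using hε))
  refine ⟨∑ n ∈ Finset.range (N₀ + 1), |f n|, fun N => ?_⟩
  rcases lt_or_ge N (N₀ + 1) with hN | hN
  · have := Finset.single_le_sum (fun n _ => abs_nonneg (f n)) (Finset.mem_range.2 hN)
    have : 0 ≤ ε * N := by positivity
    linarith
  · have hNpos : (0 : ℝ) < N := mod_cast (Nat.succ_pos N₀).trans_le hN
    have hlt := hN₀ N (by omega)
    rw [abs_div, abs_of_pos hNpos, div_lt_iff₀ hNpos] at hlt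
    have : 0 ≤ ∑ n ∈ Finset.range (N₀ + 1), |f n| := Finset.sum_nonneg fun n _ => abs_nonneg _
    linarith

lemma isLittleO_sum_mul_of_monotone (hw : Monotone w) (hw0 : 0 ≤ w)
    (ha : Tendsto (fun N : ℕ => (∑ n ∈ Finset.range (N + 1), a n) / N) atTop (𝓝 0)) :
    (fun N : ℕ => ∑ n ∈ Finset.range (N + 1), w n * a n) =o[atTop] fun N : ℕ => N * w N := by
  rw [Asymptotics.isLittleO_iff]
  intro ε hε
  obtain ⟨C, hC⟩ := exists_forall_abs_le_mul_add ha (show 0 < ε / 4 by positivity)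
  filter_upwards [tendsto_natCast_atTop_atTop.eventually (eventually_ge_atTop (C / (ε / 4)))]
    with N hN
  have hCN : C ≤ ε / 4 * N := by
    rw [mul_comm]
    exact (div_le_iff₀ (by positivity)).1 hN
  rw [norm_eq_abs, norm_of_nonneg (mul_nonneg N.cast_nonneg (hw0 N))]
  calc |∑ n ∈ Finset.range (N + 1), w n * a n| ≤ 2 * (ε / 2 * N) * w N :=
        abs_sum_mul_le_of_monotone hw hw0 fun n hn => by
          have : ε / 4 * n ≤ ε / 4 * N := by gcongr
          linarith [hC n]
    _ = ε * (N * w N) := by ring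

lemma eventually_mul_le_sum_Ioc_half {β : ℝ} (hβ : 0 < β)
    (hb : Tendsto (fun N : ℕ => (∑ n ∈ Finset.range (N + 1), b n) / N) atTop (𝓝 β)) :
    ∀ᶠ N : ℕ in atTop, β / 8 * N ≤ ∑ n ∈ Finset.Ioc (N / 2) N, b n := by
  have hhalf : Tendsto (fun N : ℕ => N / 2) atTop atTop :=
    Nat.tendsto_div_const_atTop two_ne_zero
  filter_upwards [hb.eventually_const_lt (show 3 / 4 * β < β by linarith),
    hhalf.eventually (hb.eventually_lt_const (show β < 5 / 4 * β by linarith)),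
    eventually_ge_atTop 2] with N hlower hupper hN
  have hNpos : (0 : ℝ) < N := by positivity
  have hMpos : (0 : ℝ) < (N / 2 : ℕ) := mod_cast Nat.div_pos hN two_pos
  have hM : ((N / 2 : ℕ) : ℝ) ≤ N / 2 := Nat.cast_div_le
  rw [lt_div_iff₀ hNpos] at hlower
  rw [div_lt_iff₀ hMpos] at hupper
  have hsplit := Finset.sum_range_add_sum_Ico b (show N / 2 + 1 ≤ N + 1 by omega)
  rw [Finset.Ico_add_one_add_one_eq_Ioc] at hsplit
  have := mul_le_mul_of_nonneg_left hM hβ.le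
  linarith

lemma isBigO_mul_sum_mul_of_monotone (hw : Monotone w) (hw0 : 0 ≤ w) {K : ℝ}
    (hwK : ∀ᶠ N in atTop, w N ≤ K * w (N / 2)) (hb0 : 0 ≤ b) {β : ℝ} (hβ : 0 < β)
    (hb : Tendsto (fun N : ℕ => (∑ n ∈ Finset.range (N + 1), b n) / N) atTop (𝓝 β)) :
    (fun N : ℕ => N * w N) =O[atTop] fun N : ℕ => ∑ n ∈ Finset.range (N + 1), w n * b n := by
  refine Asymptotics.IsBigO.of_bound (8 / β * |K|) ?_
  filter_upwards [hwK, eventually_mul_le_sum_Ioc_half hβ hb] with N hwN hbN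
  have hwb : ∀ n, 0 ≤ w n * b n := fun n => mul_nonneg (hw0 n) (hb0 n)
  have hhalf : w (N / 2) * ∑ n ∈ Finset.Ioc (N / 2) N, b n ≤
      ∑ n ∈ Finset.range (N + 1), w n * b n := by
    rw [Finset.mul_sum]
    refine (Finset.sum_le_sum fun n hn => mul_le_mul_of_nonneg_right
      (hw (Finset.mem_Ioc.1 hn).1.le) (hb0 n)).trans
        (Finset.sum_le_sum_of_subset_of_nonneg (fun n hn => ?_) fun n _ _ => hwb n)
    exact Finset.mem_range_succ_iff.2 (Finset.mem_Ioc.1 hn).2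
  rw [norm_of_nonneg (mul_nonneg N.cast_nonneg (hw0 N)),
    norm_of_nonneg (Finset.sum_nonneg fun n _ => hwb n)]
  calc N * w N ≤ N * (|K| * w (N / 2)) := by
        gcongr
        exact hwN.trans (mul_le_mul_of_nonneg_right (le_abs_self K) (hw0 _))
    _ = 8 / β * |K| * (w (N / 2) * (β / 8 * N)) := by field_simp
    _ ≤ 8 / β * |K| * (w (N / 2) * ∑ n ∈ Finset.Ioc (N / 2) N, b n) := by
        gcongr
        exact hw0 _
    _ ≤ _ := by gcongr

theorem tendsto_sum_mul_div_sum_mul (hw : Monotone w) (hw0 : 0 ≤ w)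
    (hwpos : ∀ᶠ N in atTop, w N ≠ 0) {K : ℝ} (hwK : ∀ᶠ N in atTop, w N ≤ K * w (N / 2))
    (hb0 : 0 ≤ b) {α β : ℝ} (hβ : 0 < β)
    (ha : Tendsto (fun N : ℕ => (∑ n ∈ Finset.range (N + 1), a n) / N) atTop (𝓝 α))
    (hb : Tendsto (fun N : ℕ => (∑ n ∈ Finset.range (N + 1), b n) / N) atTop (𝓝 β)) :
    Tendsto (fun N : ℕ => (∑ n ∈ Finset.range (N + 1), w n * a n) /
      ∑ n ∈ Finset.range (N + 1), w n * b n) atTop (𝓝 (α / β)) := by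
  have hbig := isBigO_mul_sum_mul_of_monotone hw hw0 hwK hb0 hβ hb
  have hmean : Tendsto (fun N : ℕ => (∑ n ∈ Finset.range (N + 1), (a n - α / β * b n)) / N) atTop
      (𝓝 0) := by
    simpa only [Finset.sum_sub_distrib, ← Finset.mul_sum, sub_div, mul_div_assoc,
      div_mul_cancel₀ α hβ.ne', sub_self] using ha.sub (hb.const_mul (α / β))
  have hlim :=
    ((isLittleO_sum_mul_of_monotone hw hw0 hmean).trans_isBigO hbig).tendsto_div_nhds_zero
  rw [← add_zero (α / β)]
  refine (hlim.const_add (α / β)).congr' ?_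
  filter_upwards [hbig.eq_zero_imp, hwpos, eventually_ne_atTop 0] with N hzero hwN hN
  have hsum : ∑ n ∈ Finset.range (N + 1), w n * b n ≠ 0 := fun h =>
    mul_ne_zero (Nat.cast_ne_zero.2 hN) hwN (hzero h)
  simp only [mul_sub, mul_left_comm _ (α / β), Finset.sum_sub_distrib, ← Finset.mul_sum]
  field_simp
  ring

end WeightedMeans

section PrimeSums

/-- The weight `n^k (n - 1)² / log n`, which turns the density `log p` on the primes into
`p^k (p - 1)²`. -/
noncomputable def shiftedPrimeWeight (k n : ℕ) : ℝ := (n : ℝ) ^ k * ((n : ℝ) - 1) ^ 2 / log n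

lemma shiftedPrimeWeight_nonneg (k : ℕ) : 0 ≤ shiftedPrimeWeight k := fun n => by
  have := log_natCast_nonneg n
  unfold shiftedPrimeWeight
  positivity

lemma shiftedPrimeWeight_pos (k : ℕ) {n : ℕ} (hn : 2 ≤ n) : 0 < shiftedPrimeWeight k n := by
  have hn1 : (1 : ℝ) < n := mod_cast hn
  have := log_pos hn1
  have : (0 : ℝ) < n - 1 := sub_pos.2 hn1
  unfold shiftedPrimeWeight
  positivity

lemma shiftedPrimeWeight_mul_log (k : ℕ) {n : ℕ} (hn : 2 ≤ n) :
    shiftedPrimeWeight k n * log n = (n : ℝ) ^ k * ((n : ℝ) - 1) ^ 2 :=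
  div_mul_cancel₀ _ (log_pos (mod_cast hn)).ne'

lemma sub_one_div_log_le {x : ℝ} (hx : 1 < x) : (x - 1) / log x ≤ x / log (x + 1) := by
  have hx0 : 0 < x := one_pos.trans hx
  rw [div_le_div_iff₀ (log_pos hx) (log_pos (by linarith))]
  have hlower : 1 - x⁻¹ ≤ log x := one_sub_inv_le_log_of_pos hx0
  have hstep : log (x + 1) ≤ log x + x⁻¹ := by
    have h := log_le_sub_one_of_pos (show 0 < (x + 1) / x by positivity)
    rw [log_div (by positivity) hx0.ne', add_div, div_self hx0.ne', one_div] at h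
    linarith
  calc (x - 1) * log (x + 1) ≤ (x - 1) * (log x + x⁻¹) :=
        mul_le_mul_of_nonneg_left hstep (sub_nonneg.2 hx.le)
    _ = (x - 1) * log x + (1 - x⁻¹) := by field_simp
    _ ≤ x * log x := by linarith

lemma monotone_shiftedPrimeWeight (k : ℕ) : Monotone (shiftedPrimeWeight k) := by
  refine monotone_nat_of_le_succ fun n => ?_
  rcases lt_or_ge n 2 with hn | hn
  · have : shiftedPrimeWeight k n = 0 := by interval_cases n <;> simp [shiftedPrimeWeight]
    exact this.trans_le (shiftedPrimeWeight_nonneg k (n + 1))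
  · have hn1 : (1 : ℝ) < n := mod_cast hn
    have : 0 < log ((n : ℝ) + 1) := log_pos (by linarith)
    have : (0 : ℝ) ≤ n - 1 := sub_nonneg.2 hn1.le
    calc shiftedPrimeWeight k n = (n : ℝ) ^ k * (n - 1) * ((n - 1) / log n) := by
          unfold shiftedPrimeWeight
          ring
      _ ≤ (n + 1 : ℝ) ^ k * n * (n / log (n + 1)) := by
          gcongr ?_ ^ k * ?_ * ?_
          · linarith
          · linarith
          · exact sub_one_div_log_le hn1
      _ = shiftedPrimeWeight k (n + 1) := by
          unfold shiftedPrimeWeight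
          push_cast
          ring

lemma shiftedPrimeWeight_le_half (k : ℕ) {N : ℕ} (hN : 4 ≤ N) :
    shiftedPrimeWeight k N ≤ 3 ^ k * 16 * shiftedPrimeWeight k (N / 2) := by
  have hM : (2 : ℝ) ≤ (N / 2 : ℕ) := mod_cast (show 2 ≤ N / 2 by omega)
  have hNM : (N : ℝ) ≤ 2 * (N / 2 : ℕ) + 1 := mod_cast (show N ≤ 2 * (N / 2) + 1 by omega)
  have hMN : ((N / 2 : ℕ) : ℝ) ≤ N := mod_cast Nat.div_le_self N 2
  have hlog : 0 < log (N / 2 : ℕ) := log_pos (by linarith)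
  unfold shiftedPrimeWeight
  calc (N : ℝ) ^ k * ((N : ℝ) - 1) ^ 2 / log N
      ≤ (3 * (N / 2 : ℕ)) ^ k * (4 * ((N / 2 : ℕ) - 1)) ^ 2 / log (N / 2 : ℕ) := by
        gcongr <;> linarith
    _ = _ := by ring

theorem tendsto_sum_primesLE_div_sum_primesLE (k : ℕ) :
    Tendsto (fun N : ℕ => (∑ p ∈ N.primesLE, (p : ℝ) ^ k * stephensSum (p - 1)) /
      ∑ p ∈ N.primesLE, (p : ℝ) ^ k * ((p : ℝ) - 1) ^ 2) atTop (𝓝 stephensConstant) := by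
  have hdensity : Tendsto (fun N : ℕ => (∑ p ∈ N.primesLE, log p) / N) atTop (𝓝 1) := by
    simpa only [thetaResidue_zmod_one, Nat.totient_one, Nat.cast_one, inv_one] using
      tendsto_thetaResidue_div (isUnit_one (M := ZMod 1))
  have hmean := tendsto_sum_primesLE_log_mul_stephensSum_div
  simp only [Nat.primesLE_eq_filter_range, Finset.sum_filter] at hdensity hmean ⊢
  have hratio := tendsto_sum_mul_div_sum_mul (monotone_shiftedPrimeWeight k)
    (shiftedPrimeWeight_nonneg k)
    ((eventually_ge_atTop 2).mono fun N hN => (shiftedPrimeWeight_pos k hN).ne')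
    ((eventually_ge_atTop 4).mono fun N hN => shiftedPrimeWeight_le_half k hN)
    (fun n => by positivity) one_pos hmean hdensity
  rw [div_one] at hratio
  refine hratio.congr fun N => ?_
  congr 1 <;> refine Finset.sum_congr rfl fun p _ => ?_ <;> split_ifs with hp
  · have hp1 : (p : ℝ) - 1 ≠ 0 := sub_ne_zero.2 (mod_cast hp.one_lt.ne')
    calc _ = shiftedPrimeWeight k p * log p * (stephensSum (p - 1) / ((p : ℝ) - 1) ^ 2) := by
          rw [Nat.cast_pred hp.pos, mul_assoc]
      _ = _ := by
          rw [shiftedPrimeWeight_mul_log k hp.two_le]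
          field_simp
  · exact mul_zero _
  · exact shiftedPrimeWeight_mul_log k hp.two_le
  · exact mul_zero _

lemma sum_range_nth {M : Type*} [AddCommMonoid M] {P : ℕ → Prop} [DecidablePred P]
    (hP : (ofPred P).Infinite) (f : ℕ → M) (N : ℕ) : ∑ i ∈ Finset.range N, f (Nat.nth P i) =
      ∑ n ∈ Finset.range (Nat.nth P N) with P n, f n := by
  induction N with
  | zero =>
    have hempty : {n ∈ Finset.range (Nat.nth P 0) | P n} = ∅ := by
      rw [← Finset.card_eq_zero, ← Nat.count_eq_card_filter_range, Nat.count_nth_zero]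
    rw [hempty, Finset.sum_range_zero, Finset.sum_empty]
  | succ N ih =>
    rw [Finset.sum_range_succ, ih, Nat.filter_range_nth_eq_insert_of_infinite hP,
      Finset.sum_insert (by simp), add_comm]

lemma sum_range_nth_prime (f : ℕ → ℝ) (N : ℕ) :
    ∑ i ∈ Finset.range N, f (Nat.nth Nat.Prime i) =
      ∑ p ∈ (Nat.nth Nat.Prime N - 1).primesLE, f p := by
  rw [sum_range_nth Nat.infinite_setOfPred_prime, ← Nat.primesBelow_eq_primesLE_sub_one,
    Nat.primesBelow]

end PrimeSums

end

/-- For every `k ≥ 0`, the ratio `(∑_{i=1}^N p_i^k 𝒮(p_i - 1)) / (∑_{i=1}^N p_i^k (p_i - 1)²)`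
over the first `N` primes tends to Stephens' constant. -/
theorem stephens_ratio_formula (k : ℕ) :
    Tendsto (fun N : ℕ =>
        (∑ i ∈ Finset.range N,
          (Nat.nth Nat.Prime i : ℝ) ^ k * (stephensSum (Nat.nth Nat.Prime i - 1) : ℝ)) /
        (∑ i ∈ Finset.range N,
          (Nat.nth Nat.Prime i : ℝ) ^ k * ((Nat.nth Nat.Prime i : ℝ) - 1) ^ 2))
      atTop (nhds stephensConstant) := by
  have hprime : Tendsto (fun N : ℕ => Nat.nth Nat.Prime N - 1) atTop atTop :=
    (tendsto_sub_atTop_nat 1).comp (Nat.nth_strictMono Nat.infinite_setOfPred_prime).tendsto_atTop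
  refine ((tendsto_sum_primesLE_div_sum_primesLE k).comp hprime).congr fun N => ?_
  rw [Function.comp_apply, ← sum_range_nth_prime (fun p => (p : ℝ) ^ k * stephensSum (p - 1)),
    ← sum_range_nth_prime (fun p => (p : ℝ) ^ k * ((p : ℝ) - 1) ^ 2)]
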